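/- arXiv:2101.04707 — 6 statements merged into one kernel-verified Lean document; each statement's English description precedes it below -/
import Mathlib

section
/- Let (K,v) be a nontrivially valued field of characteristic p > 0. If K admits only finitely many distinct Artin-Schreier extensions (inside a fixed algebraic closure of K), then K is dense in its perfect hull K^{1/p^∞} with respect to the topology induced by the valuation; in particular the value group vK is p-divisible and the residue field Kv is perfect. -/
/-!
For `b ∈ K` write `℘(b) = b ^ p - b`.  By Artin–Schreier theory the finiteness hypothesis
forces `K / ℘(K)` to be finite; what is needed is that in any sequence `b₀, b₁, …` of `K`
two terms with distinct indices differ by an element `℘(c)` with `c ∈ K` (`exists_ne_sub_eq`).  Apply this to `bᵢ = a tᵢ ^ p`, where all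
differences `s = tᵢ - tⱼ` have large value.  Then `a s ^ p = c ^ p - c`, hence
`a - (c / s) ^ p = -c / s ^ p`, while `v c` is at most about `v (a s ^ p) ^ (1 / p)`.  So the
error is arbitrarily small and `K ^ p` is dense in `K` (`exists_pow_close`).  The three
conclusions follow: density in the perfect hull by induction on the exponent of `p`, and the two
others by approximating `x` up to an error of value less than `v x`, respectively less than `1`.
-/

/-- An Artin-Schreier extension of `K` inside a fixed algebraic closure `Ω`: an
intermediate field generated over `K` by a root `θ ∉ K` of a polynomial `X^p − X − b`
with `b ∈ K` (such an extension is Galois of degree `p`). -/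
def IsArtinSchreierExtension (K Ω : Type*) [Field K] [Field Ω] [Algebra K Ω] (p : ℕ)
    (E : IntermediateField K Ω) : Prop :=
  ∃ θ : Ω, E = IntermediateField.adjoin K {θ} ∧ θ ∉ Set.range (algebraMap K Ω) ∧
    θ ^ p - θ ∈ Set.range (algebraMap K Ω)

open Polynomial in
/-- Since `X ^ p - X - b` is separable, Galois descent holds for its roots. -/
lemma mem_range_of_fixed {K Ω : Type*} [Field K] [Field Ω] [Algebra K Ω] [IsAlgClosure K Ω]
    (p : ℕ) [Fact p.Prime] [CharP K p] {δ : Ω}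
    (hδ : δ ^ p - δ ∈ Set.range (algebraMap K Ω)) (hfix : ∀ σ : Ω ≃ₐ[K] Ω, σ δ = δ) :
    δ ∈ Set.range (algebraMap K Ω) := by
  classical
  have : Normal K Ω := IsAlgClosure.normal K Ω
  have hint : IsIntegral K δ := Normal.isIntegral this δ
  obtain ⟨b, hb⟩ := hδ
  have hsep : (minpoly K δ).Separable := by
    have h : (X ^ p - X - C b : K[X]).Separable := by
      rw [Polynomial.separable_def]
      have : derivative (X ^ p - X - C b : K[X]) = -1 := by
        simp [derivative_X_pow]
      rw [this]
      exact isCoprime_one_right.neg_right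
    refine h.of_dvd (minpoly.dvd K δ ?_)
    simp [hb]
  apply minpoly.mem_range_of_degree_eq_one K δ
  have hspl := Normal.splits this δ
  have hroots : ∀ y ∈ ((minpoly K δ).map (algebraMap K Ω)).roots, y = δ := by
    intro y hy
    have hy0 : aeval y (minpoly K δ) = 0 := by
      have := (mem_roots'.1 hy).2
      rwa [IsRoot.def, eval_map_algebraMap] at this
    obtain ⟨σ, hσ⟩ := minpoly.exists_algEquiv_of_root' hint.isAlgebraic hy0
    rw [← hσ, hfix]
  have hnd : ((minpoly K δ).map (algebraMap K Ω)).roots.Nodup :=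
    nodup_roots hsep.map
  have hcard : ((minpoly K δ).map (algebraMap K Ω)).roots.card ≤ 1 := by
    have h := (Multiset.nodup_iff_count_le_one.1 hnd) δ
    rw [Multiset.eq_replicate_card.2 hroots] at h
    simpa using h
  have hdeg : (minpoly K δ).natDegree ≤ 1 := by
    rw [← natDegree_map (algebraMap K Ω), hspl.natDegree_eq_card_roots]
    exact hcard
  have := minpoly.natDegree_pos hint
  rw [degree_eq_natDegree (minpoly.ne_zero hint)]
  have : (minpoly K δ).natDegree = 1 := by omega
  simp [this]

/-- An element of the prime field `F_p` is a natural multiple of any nonzero one. -/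
lemma exists_nat_mul_eq {F : Type*} [Field F] (p : ℕ) [Fact p.Prime] [CharP F p] {k l : F}
    (hk : k ^ p = k) (hk0 : k ≠ 0) (hl : l ^ p = l) : ∃ n : ℕ, l = n * k := by
  have h : (l / k) ^ p = l / k := by rw [div_pow, hk, hl]
  let := ZMod.algebra F p
  obtain ⟨z, hz⟩ : ∃ z : ZMod p, algebraMap (ZMod p) F z = l / k := by
    have := (Subfield.mem_bot_iff_pow_eq_self (F := F) (p := p)).2 h
    have hle : (⊥ : Subfield F) ≤ (algebraMap (ZMod p) F).fieldRange := bot_le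
    exact hle this
  refine ⟨z.val, ?_⟩
  rw [← div_eq_iff hk0, ← hz]
  rw [← map_natCast (algebraMap (ZMod p) F), ZMod.natCast_zmod_val]

/-- If `K` has only finitely many Artin–Schreier extensions, any sequence of Artin–Schreier roots
has two terms that differ by an element of `K`.  Infinitely many `θ i` generate the same `E`; if `σ₀` moves
one of them, two of them are translated by `σ₀` by the same element of `F_p`, so their difference
is fixed by `σ₀`, which generates `Gal(E/K)`. -/
lemma exists_ne_sub_mem {K Ω : Type*} [Field K] [Field Ω] [Algebra K Ω] [IsAlgClosure K Ω]
    (p : ℕ) [Fact p.Prime] [CharP K p]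
    (hfin : {E : IntermediateField K Ω | IsArtinSchreierExtension K Ω p E}.Finite)
    (θ : ℕ → Ω) (hθ : ∀ i, θ i ^ p - θ i ∈ Set.range (algebraMap K Ω)) :
    ∃ i j, i ≠ j ∧ θ i - θ j ∈ Set.range (algebraMap K Ω) := by
  classical
  have : CharP Ω p := charP_of_injective_algebraMap (algebraMap K Ω).injective p
  have hmem : ∀ i, IntermediateField.adjoin K {θ i} ∈
      insert ⊥ {E : IntermediateField K Ω | IsArtinSchreierExtension K Ω p E} := by
    intro i
    by_cases h : θ i ∈ Set.range (algebraMap K Ω)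
    · left
      rw [IntermediateField.adjoin_simple_eq_bot_iff]
      exact IntermediateField.mem_bot.2 h
    · right
      exact ⟨θ i, rfl, h, hθ i⟩
  have := (hfin.insert ⊥).to_subtype
  obtain ⟨⟨E, _⟩, hinf⟩ := Finite.exists_infinite_fiber
    (fun i : ℕ => (⟨_, hmem i⟩ : (insert ⊥ {E : IntermediateField K Ω |
      IsArtinSchreierExtension K Ω p E} : Set _)))
  set I := ((fun i : ℕ => (⟨_, hmem i⟩ : (insert ⊥ {E : IntermediateField K Ω |
      IsArtinSchreierExtension K Ω p E} : Set _))) ⁻¹' {⟨E, ‹_›⟩}) with hI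
  have hE : ∀ i : I, IntermediateField.adjoin K {θ i} = E := fun i =>
    congrArg Subtype.val i.2
  have hmemE : ∀ i : I, θ i ∈ E := fun i => by
    rw [← hE i]; exact IntermediateField.mem_adjoin_simple_self K _
  have hd : ∀ (σ : Ω ≃ₐ[K] Ω) (i : ℕ), (σ (θ i) - θ i) ^ p = σ (θ i) - θ i := by
    intro σ i
    obtain ⟨b, hb⟩ := hθ i
    have h1 : σ (θ i) ^ p - σ (θ i) = algebraMap K Ω b := by
      rw [← map_pow, ← map_sub, ← hb, AlgEquiv.commutes]
    rw [sub_pow_char]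
    linear_combination h1 + hb
  by_cases hall : ∀ i : I, θ i ∈ Set.range (algebraMap K Ω)
  · obtain ⟨i, j, hij⟩ := exists_pair_ne I
    refine ⟨i, j, fun h => hij (Subtype.ext h), ?_⟩
    obtain ⟨a, ha⟩ := hall i
    obtain ⟨b, hb⟩ := hall j
    exact ⟨a - b, by rw [map_sub, ha, hb]⟩
  push Not at hall
  obtain ⟨i₀, hi₀⟩ := hall
  obtain ⟨σ₀, hσ₀⟩ : ∃ σ₀ : Ω ≃ₐ[K] Ω, σ₀ (θ i₀) ≠ θ i₀ := by
    by_contra! h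
    exact hi₀ (mem_range_of_fixed p (hθ i₀) h)
  have : Finite {x : Ω // x ^ p = x} := by
    have hne : (Polynomial.X ^ p - Polynomial.X : Polynomial Ω) ≠ 0 :=
      FiniteField.X_pow_card_sub_X_ne_zero Ω (Fact.out : p.Prime).one_lt
    refine Set.Finite.to_subtype
      ((Polynomial.X ^ p - Polynomial.X : Polynomial Ω).roots.toFinset.finite_toSet.subset ?_)
    intro x hx
    have hx : x ^ p = x := hx
    simp [hne, hx]
  obtain ⟨i, j, hij, heq⟩ := Finite.exists_ne_map_eq_of_infinite
    (fun i : I => (⟨σ₀ (θ i) - θ i, hd σ₀ i⟩ : {x : Ω // x ^ p = x}))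
  have heq : σ₀ (θ i) - θ i = σ₀ (θ j) - θ j := congrArg Subtype.val heq
  refine ⟨i, j, fun h => hij (Subtype.ext h), ?_⟩
  have hfix₀ : σ₀ (θ i - θ j) = θ i - θ j := by
    rw [map_sub]; linear_combination heq
  apply mem_range_of_fixed p
  · obtain ⟨a, ha⟩ := hθ i
    obtain ⟨b, hb⟩ := hθ j
    exact ⟨a - b, by rw [map_sub, ha, hb, sub_pow_char]; ring⟩
  intro σ
  obtain ⟨n, hn⟩ := exists_nat_mul_eq p (hd σ₀ i₀) (sub_ne_zero.2 hσ₀) (hd σ i₀)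
  -- `Gal(E/K)` is generated by `σ₀`, because an automorphism is determined by its translation
  -- of `θ i₀` by an element of `F_p`.
  have hk : σ₀ (σ₀ (θ i₀) - θ i₀) = σ₀ (θ i₀) - θ i₀ := by
    obtain ⟨m, hm⟩ := exists_nat_mul_eq (F := Ω) p (one_pow p) one_ne_zero (hd σ₀ i₀)
    rw [hm]; simp
  have hpow : ∀ m : ℕ, (σ₀ ^ m) (θ i₀) = θ i₀ + m * (σ₀ (θ i₀) - θ i₀) := by
    intro m
    induction m with
    | zero => simp
    | succ m ih =>
      rw [pow_succ', AlgEquiv.mul_apply, ih, map_add, map_mul, map_natCast, hk]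
      push_cast; ring
  have hagree : σ (θ i₀) = (σ₀ ^ n) (θ i₀) := by
    rw [hpow]; linear_combination hn
  have hext : ∀ x ∈ E, σ x = (σ₀ ^ n) x := by
    intro x hx
    rw [← hE i₀, IntermediateField.mem_adjoin_simple_iff] at hx
    obtain ⟨r, s, rfl⟩ := hx
    have hr : ∀ (τ : Ω ≃ₐ[K] Ω) (q : Polynomial K) (y : Ω),
        τ (Polynomial.aeval y q) = Polynomial.aeval (τ y) q := fun τ q y =>
      (Polynomial.aeval_algHom_apply τ y q).symm
    rw [map_div₀, map_div₀, hr, hr, hr, hr, hagree]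
  rw [hext _ (sub_mem (hmemE i) (hmemE j))]
  clear hext hagree hn
  induction n with
  | zero => simp
  | succ n ih => rw [pow_succ, AlgEquiv.mul_apply, hfix₀, ih]

lemma exists_ne_sub_eq {K Ω : Type*} [Field K] [Field Ω] [Algebra K Ω] [IsAlgClosure K Ω]
    (p : ℕ) [Fact p.Prime] [CharP K p]
    (hfin : {E : IntermediateField K Ω | IsArtinSchreierExtension K Ω p E}.Finite)
    (b : ℕ → K) : ∃ i j, i ≠ j ∧ ∃ c : K, b i - b j = c ^ p - c := by
  have : CharP Ω p := charP_of_injective_algebraMap (algebraMap K Ω).injective p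
  have : IsAlgClosed Ω := IsAlgClosure.isAlgClosed K
  have hex : ∀ i, ∃ θ : Ω, θ ^ p - θ = algebraMap K Ω (b i) := by
    intro i
    have hp := (Fact.out : p.Prime).one_lt
    have hdeg : (Polynomial.X ^ p - (Polynomial.X + Polynomial.C (algebraMap K Ω (b i))) :
        Polynomial Ω).degree ≠ 0 := by
      rw [Polynomial.degree_sub_eq_left_of_degree_lt]
      · rw [Polynomial.degree_X_pow]
        exact_mod_cast (by omega : p ≠ 0)
      · rw [Polynomial.degree_X_add_C, Polynomial.degree_X_pow]
        exact_mod_cast hp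
    obtain ⟨θ, hθ⟩ := IsAlgClosed.exists_root _ hdeg
    refine ⟨θ, ?_⟩
    simp [Polynomial.IsRoot] at hθ
    linear_combination hθ
  choose θ hθ using hex
  obtain ⟨i, j, hij, c, hc⟩ := exists_ne_sub_mem p hfin θ (fun i => ⟨b i, (hθ i).symm⟩)
  refine ⟨i, j, hij, c, (algebraMap K Ω).injective ?_⟩
  rw [map_sub, map_sub, map_pow, hc, ← hθ, ← hθ, sub_pow_char]
  ring

/-- A solution `c` of `c ^ p - c = d` satisfies `v c ^ p ≤ max 1 (v d)`. -/
lemma val_pow_le {K Γ : Type*} [Field K] [LinearOrderedCommGroupWithZero Γ] (w : Valuation K Γ)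
    {p : ℕ} (hp : 1 < p) {c d : K} (h : d = c ^ p - c) : w c ^ p ≤ max 1 (w d) := by
  rcases le_or_gt (w c) 1 with h1 | h1
  · exact le_max_of_le_left (pow_le_one' h1 p)
  · apply le_max_of_le_right
    rw [h, Valuation.map_sub_eq_of_lt_left w (by
      rw [map_pow]; exact lt_self_pow₀ h1 hp), map_pow]

/-- `K ^ p` is dense in `K`. -/
lemma exists_pow_close {K Γ : Type*} [Field K] [LinearOrderedCommGroupWithZero Γ]
    (w : Valuation K Γ) (p : ℕ) [Fact p.Prime] [CharP K p]
    (hnontriv : ∃ x : K, x ≠ 0 ∧ w x ≠ 1)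
    (hAS : ∀ b : ℕ → K, ∃ i j, i ≠ j ∧ ∃ c : K, b i - b j = c ^ p - c)
    (a b : K) (hb : b ≠ 0) : ∃ c : K, w (a - c ^ p) < w b := by
  have hp := (Fact.out : p.Prime).one_lt
  obtain ⟨t, ht⟩ : ∃ t : K, 1 < w t := by
    obtain ⟨x, hx0, hx⟩ := hnontriv
    rcases lt_or_gt_of_ne hx with h | h
    · exact ⟨x⁻¹, (w.val_lt_one_iff hx0).1 h⟩
    · exact ⟨x, h⟩
  -- `u` has value greater than `1`, `1 / v b` and `v a / v b ^ p`.
  obtain ⟨u, hu1, hub, hua⟩ : ∃ u : K, 1 < w u ∧ w b⁻¹ < w u ∧ w (a / b ^ p) < w u := by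
    have hmul : ∀ x : K, 1 ≤ w x → w x < w (t * x) := by
      intro x hx
      rw [map_mul]
      exact lt_mul_of_one_lt_left (zero_lt_one.trans_le hx) ht
    have hmax : ∀ x y : K, ∃ z : K, w z = max (w x) (w y) := by
      intro x y
      rcases le_total (w x) (w y) with h | h
      · exact ⟨y, (max_eq_right h).symm⟩
      · exact ⟨x, (max_eq_left h).symm⟩
    obtain ⟨y, hy⟩ := hmax b⁻¹ (a / b ^ p)
    obtain ⟨z, hz⟩ := hmax 1 y
    rw [map_one] at hz
    have hz1 : 1 ≤ w z := hz ▸ le_max_left _ _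
    have hyz : w y ≤ w z := hz ▸ le_max_right _ _
    refine ⟨t * z, hz1.trans_lt (hmul z hz1), ?_, ?_⟩
    · exact ((le_max_left _ _).trans (hy.ge.trans hyz)).trans_lt (hmul z hz1)
    · exact ((le_max_right _ _).trans (hy.ge.trans hyz)).trans_lt (hmul z hz1)
  obtain ⟨i, j, hij, c, hc⟩ := hAS (fun i => a * (u ^ (i + 1)) ^ p)
  set s : K := u ^ (i + 1) - u ^ (j + 1) with hs
  have hle : ∀ m : ℕ, w u ≤ w (u ^ (m + 1)) := by
    intro m
    rw [map_pow]
    exact le_self_pow₀ hu1.le (Nat.succ_ne_zero m)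
  have hsu : w u ≤ w s := by
    have hmono : ∀ m n : ℕ, m < n → w (u ^ (m + 1)) < w (u ^ (n + 1)) := by
      intro m n h
      rw [map_pow, map_pow]
      exact pow_lt_pow_right₀ hu1 (by omega)
    rcases lt_or_gt_of_ne hij with h | h
    · rw [hs, Valuation.map_sub_eq_of_lt_right w (hmono _ _ h)]
      exact hle j
    · rw [hs, Valuation.map_sub_eq_of_lt_left w (hmono _ _ h)]
      exact hle i
  have hs1 : 1 < w s := hu1.trans_le hsu
  have hs0 : s ≠ 0 := by
    rintro h
    rw [h, map_zero] at hs1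
    exact absurd hs1 (not_lt.2 zero_le_one)
  have hc' : a * s ^ p = c ^ p - c := by
    rw [← hc, hs, sub_pow_char]; ring
  have hval := val_pow_le w hp hc'
  have hb0 : 0 < w b := (w.pos_iff).2 hb
  have hbs : 1 < w b * w s := by
    have := hub.trans_le hsu
    rwa [map_inv₀, inv_lt_iff_one_lt_mul₀' hb0] at this
  have hsp : w s ≤ w s ^ p := le_self_pow₀ hs1.le (by omega)
  -- The error term is `-c / s ^ p`.
  have hkey : w c < w b * w s ^ p := by
    refine lt_of_pow_lt_pow_left₀ p zero_le (hval.trans_lt (max_lt ?_ ?_))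
    · refine one_lt_pow₀ (hbs.trans_le ?_) (by omega)
      gcongr
    · have h1 : w a < w b ^ p * w s := by
        have := hua.trans_le hsu
        rw [map_div₀, map_pow, div_lt_iff₀ (pow_pos hb0 p)] at this
        rwa [mul_comm]
      have hsp0 : 0 < w s ^ p := pow_pos (zero_lt_one.trans hs1) p
      calc w (a * s ^ p) = w a * w s ^ p := by rw [map_mul, map_pow]
        _ < (w b ^ p * w s) * w s ^ p := mul_lt_mul_of_pos_right h1 hsp0
        _ = w b ^ p * w s ^ (p + 1) := by rw [mul_assoc, pow_succ']
        _ ≤ w b ^ p * w s ^ (p * p) := by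
            gcongr
            · exact hs1.le
            · nlinarith
        _ = (w b * w s ^ p) ^ p := by rw [mul_pow, pow_mul]
  refine ⟨c / s, ?_⟩
  have herr : a - (c / s) ^ p = -(c / s ^ p) := by
    have : s ^ p ≠ 0 := pow_ne_zero _ hs0
    rw [div_pow, sub_eq_iff_eq_add, neg_add_eq_sub, ← sub_div, eq_div_iff this, hc']
  rw [herr, Valuation.map_neg, map_div₀, map_pow, div_lt_iff₀ (pow_pos (zero_lt_one.trans hs1) p)]
  exact hkey

/-- Let `(K,v)` be a nontrivially valued field of characteristic
`p > 0`.  If `K` admits only finitely many distinct Artin-Schreier extensions (inside a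
fixed algebraic closure `Ω` of `K`), then `K` is dense in its perfect hull `K^{1/p^∞}`
with respect to the topology induced by the valuation; in particular the value group
`vK` is `p`-divisible and the residue field `Kv` is perfect.

`Ω` carries an extension `v` of the valuation, and the perfect hull of `K` is taken
inside `Ω` (its elements are the `x` with `x^{p^n} ∈ K` for some `n`).  Multiplicative
notation for `v`: density says that for every such `x` and every nonzero value `γ ∈ vK`
there is `c ∈ K` with `v(x − c) < γ`; `p`-divisibility of `vK` says every value of `K`
is a `p`-th power of a value of `K`; perfectness of `Kv` says every residue is a `p`-th
power of a residue. -/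
theorem statement0 {K Ω : Type*} [Field K] [Field Ω] [Algebra K Ω] [IsAlgClosure K Ω]
    {Γ : Type*} [LinearOrderedCommGroupWithZero Γ] (v : Valuation Ω Γ)
    (p : ℕ) [Fact p.Prime] [CharP K p]
    (hnontriv : ∃ x : K, x ≠ 0 ∧ v (algebraMap K Ω x) ≠ 1)
    (hfin : {E : IntermediateField K Ω | IsArtinSchreierExtension K Ω p E}.Finite) :
    -- K is dense in its perfect hull
    (∀ x : Ω, (∃ n : ℕ, x ^ p ^ n ∈ Set.range (algebraMap K Ω)) →
      ∀ γ : Γ, (∃ b : K, b ≠ 0 ∧ v (algebraMap K Ω b) = γ) →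
        ∃ c : K, v (x - algebraMap K Ω c) < γ) ∧
    -- the value group vK is p-divisible
    (∀ x : K, x ≠ 0 → ∃ y : K, v (algebraMap K Ω y) ^ p = v (algebraMap K Ω x)) ∧
    -- the residue field Kv is perfect
    (∀ x : K, v (algebraMap K Ω x) ≤ 1 →
      ∃ y : K, v (algebraMap K Ω (x - y ^ p)) < 1) := by
  have : CharP Ω p := charP_of_injective_algebraMap (algebraMap K Ω).injective p
  have hp := (Fact.out : p.Prime).pos
  have hdense : ∀ a b : K, b ≠ 0 →
      ∃ c : K, v (algebraMap K Ω (a - c ^ p)) < v (algebraMap K Ω b) := fun a b hb =>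
    exists_pow_close (v.comap (algebraMap K Ω)) p hnontriv (exists_ne_sub_eq p hfin) a b hb
  refine ⟨?_, ?_, ?_⟩
  · rintro x ⟨n, hx⟩ _ ⟨b, hb, rfl⟩
    induction n generalizing x b with
    | zero =>
      obtain ⟨c, hc⟩ := hx
      refine ⟨c, ?_⟩
      rw [hc, pow_zero, pow_one, sub_self, map_zero]
      exact (v.pos_iff).2 ((map_ne_zero _).2 hb)
    | succ n ih =>
      obtain ⟨c₀, hc₀⟩ := ih (x ^ p) (by rwa [← pow_mul, ← pow_succ']) (b ^ p)
        (pow_ne_zero p hb)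
      obtain ⟨c, hc⟩ := hdense c₀ (b ^ p) (pow_ne_zero p hb)
      refine ⟨c, lt_of_pow_lt_pow_left₀ p zero_le ?_⟩
      have h : (x - algebraMap K Ω c) ^ p =
          (x ^ p - algebraMap K Ω c₀) + algebraMap K Ω (c₀ - c ^ p) := by
        rw [sub_pow_char, map_sub, map_pow]; ring
      rw [← map_pow, ← map_pow, h, ← map_pow]
      exact v.map_add_lt hc₀ hc
  · intro x hx
    obtain ⟨y, hy⟩ := hdense x x hx
    refine ⟨y, ?_⟩
    rw [← map_pow, ← map_pow]
    rw [map_sub, Valuation.map_sub_swap] at hy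
    exact v.map_eq_of_sub_lt hy
  · intro x _
    obtain ⟨y, hy⟩ := hdense x 1 one_ne_zero
    exact ⟨y, by simpa using hy⟩
end

section
/- Let (K,v) be a valued field of mixed characteristic (char K = 0, char Kv = p > 0) of rank 1 which contains a primitive p-th root of unity. If (K,v) admits a Kummer extension of degree p with super-dependent defect, then it admits infinitely many distinct Kummer extensions of degree p with super-dependent defect. -/
/-!
Let `K(η)` be a Kummer extension with super-dependent defect, and let `δ` be the distance of `η`
from `K`. By immediacy this distance is not attained, and `δ ^ p > v p`. For `d ∈ K` with `v d < 1`
and `v p < (v d * δ) ^ p`, let `θ` be a `p`-th root of `1 + d ^ p * η ^ p`. The Frobenius congruence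
gives `v (θ - (1 + d * η)) ^ p ≤ v p`, so `θ` has unattained distance `v d * δ` from `K`. These are
the new extensions (`exists_isCloseKummerGen`). There are infinitely many values `v d` of this kind,
because quotients of the values `v (η - c)`, which accumulate at `δ`, approach `1` from below
(`exists_val_between`).

The key fact is `HasOpenDist.lt_root`: if `x` has unattained distance `δ > 0` from `K`, then all
roots of a polynomial over `K` of degree less than `p` are farther than `δ` from `x`. Otherwise a
Newton step, corrected for the number of roots near `x`, would produce an element of `K` at distance
at most `δ`. Hence such a polynomial varies at relative speed at most `1 / δ` near `x`. For
`x = θ` this has three consequences.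

* `K(θ)` is immediate: `f θ` is approximated by `f c` with `c ∈ K` close to `θ`.
* The conjugates of `θ` are within distance `v d * δ` of `θ`, so `v (σ z) ≤ v z` for every `z` in
  `K(θ)` and every embedding `σ`. Elements of value at most `1` are thus integral over the valuation
  ring of `K`, and this forces the extension of the valuation to be unique.
* The distance of `θ` is determined by the field `K(θ)` (`IsCloseKummerGen.dist_le`): it is read off
  from the supremum of `v (σ z / z - 1)` over nonzero `z` and embeddings `σ`. So different values
  `v d` give different fields.
-/

namespace Statement2

open scoped NNReal

variable (K Ω : Type*) [Field K] [Field Ω] [Algebra K Ω]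

/-- The value group `vK` of `(K,v)`, i.e. the set of values of nonzero elements of `K`.
Since `(K,v)` has rank `1` (archimedean ordered value group), the valuation is taken with
values in `ℝ≥0`, in multiplicative notation (order reversed compared with the paper's
additive value groups). -/
def valueGroup (v : Valuation Ω ℝ≥0) : Set ℝ≥0 :=
  {γ | ∃ x : K, x ≠ 0 ∧ v (algebraMap K Ω x) = γ}

/-- The subextension `(E|K,v)` is *immediate*: the canonical embeddings `vK → vE` and
`Kv → Ev` are surjective. -/
def IsImmediate (v : Valuation Ω ℝ≥0) (E : IntermediateField K Ω) : Prop :=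
  (∀ x : E, ∃ c : K, v (algebraMap K Ω c) = v (x : Ω)) ∧
  (∀ x : E, v (x : Ω) ≤ 1 → ∃ c : K, v ((x : Ω) - algebraMap K Ω c) < 1)

/-- The extension of the valuation `v` from `K` to `E` is unique: there is exactly one
valuation ring of `E` lying over the valuation ring of the restriction of `v` to `K`,
namely that of the restriction of `v` to `E`. -/
def UniqueExtension (v : Valuation Ω ℝ≥0) (E : IntermediateField K Ω) : Prop :=
  ∀ R : ValuationSubring E,
    R.toSubring.comap (algebraMap K E) = (v.comap (algebraMap K Ω)).integer →
    R = (v.comap (algebraMap E Ω)).valuationSubring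

/-- `E` is a Kummer extension of degree `p` of `(K,v)` with *super-dependent* defect:
`E = K(η)` for a `1`-unit `η` with `η^p ∈ K`, of degree `p`, which is a defect extension
(immediate, with unique extension of the valuation), such that `v(η−K) <| vp/p`, i.e.
`v(η−K) < vp/p` and `v(η−K)` is bounded away from `vp/p` by an element `β` of the
divisible hull of `vK`.

Multiplicative notation with values in `ℝ≥0` (order reversed, subtraction of values
becomes division, `p·γ` becomes `γ^p`): `v(η−1) > 0` reads `v (η−1) < 1`;
`v(η−c) < vp/p` reads `v p < (v (η−c))^p`; and the bound `v(η−K) ≤ β < vp/p` reads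
`β ≤ v (η−c)` for all `c` and `v p < β^p`, where `β^n ∈ vK` for some `n ≥ 1`
(membership in the divisible hull of `vK`). -/
def IsKummerSuperDependent (v : Valuation Ω ℝ≥0) (p : ℕ)
    (E : IntermediateField K Ω) : Prop :=
  ∃ η : Ω, E = IntermediateField.adjoin K {η} ∧
    η ∉ Set.range (algebraMap K Ω) ∧ η ^ p ∈ Set.range (algebraMap K Ω) ∧
    Module.finrank K E = p ∧
    v (η - 1) < 1 ∧
    IsImmediate K Ω v E ∧ UniqueExtension K Ω v E ∧
    (∀ c : K, v ((p : ℕ) : Ω) < v (η - algebraMap K Ω c) ^ p) ∧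
    (∃ β : ℝ≥0, (∃ n : ℕ, 0 < n ∧ β ^ n ∈ valueGroup K Ω v) ∧
      (∀ c : K, β ≤ v (η - algebraMap K Ω c)) ∧ v ((p : ℕ) : Ω) < β ^ p)

open Polynomial
/-! ### Valuations with values in `ℝ≥0` and residue characteristic `p` -/

section Valued

variable {Ω : Type*} [Field Ω] (v : Valuation Ω ℝ≥0)

lemma val_natCast_le_one (n : ℕ) : v (n : Ω) ≤ 1 := natCast_mem v.integer n

lemma val_intCast_le_one (n : ℤ) : v (n : Ω) ≤ 1 := intCast_mem v.integer n

lemma val_natCast_eq_one {p : ℕ} [hp : Fact p.Prime] (hmixed : v (p : Ω) < 1) {k : ℕ}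
    (h0 : 0 < k) (hk : k < p) : v (k : Ω) = 1 := by
  refine le_antisymm (val_natCast_le_one v k) (not_lt.1 fun hlt => ?_)
  have hcop : IsCoprime (k : ℤ) (p : ℤ) :=
    Nat.isCoprime_iff_coprime.2 ((Nat.coprime_of_lt_prime h0.ne' hk hp.out).symm)
  obtain ⟨a, b, hab⟩ := hcop
  have h1 : (a : Ω) * k + b * p = 1 := by exact_mod_cast congrArg (Int.cast : ℤ → Ω) hab
  have h2 : v ((a : Ω) * k + b * p) < 1 := by
    refine Valuation.map_add_lt _ ?_ ?_ <;> rw [map_mul]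
    · exact (mul_le_of_le_one_left zero_le (val_intCast_le_one v a)).trans_lt hlt
    · exact (mul_le_of_le_one_left zero_le (val_intCast_le_one v b)).trans_lt hmixed
  rw [h1, map_one] at h2
  exact lt_irrefl _ h2

/-- The Frobenius congruence: `(x - y)^p` agrees with `x^p - y^p` modulo `p` on integral
elements. -/
lemma val_sub_pow_le {p : ℕ} [hp : Fact p.Prime] {x y : Ω} (hx : v x ≤ 1) (hy : v y ≤ 1) :
    v (x - y) ^ p ≤ max (v (x ^ p - y ^ p)) (v (p : Ω)) := by
  let X : v.integer := ⟨x, hx⟩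
  let Y : v.integer := ⟨y, hy⟩
  obtain ⟨r, hr⟩ := exists_add_pow_prime_eq hp.out (X - Y) Y
  have h1 : (x - y) ^ p = (x ^ p - y ^ p) - p * ((X - Y) * Y * r : v.integer) := by
    have := congrArg (Subtype.val) hr
    simp [X, Y] at this
    simp [X, Y]
    linear_combination -this
  rw [← map_pow, h1]
  refine (v.map_sub _ _).trans (max_le_max le_rfl ?_)
  rw [map_mul]
  exact mul_le_of_le_one_right zero_le ((X - Y) * Y * r).2

/-- If moving from `x` to `y` changes each factor `x - r` by relative size at most `ε ≤ 1`, then it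
changes their product by relative size at most `ε`. -/
lemma val_prod_sub_prod_le {x y : Ω} {ε : ℝ≥0} (hε : ε ≤ 1) (s : Multiset Ω)
    (hs : ∀ r ∈ s, v (y - x) ≤ ε * v (x - r)) :
    v ((s.map fun r => y - r).prod - (s.map fun r => x - r).prod) ≤
      ε * v (s.map fun r => x - r).prod := by
  induction s using Multiset.induction_on with
  | empty => simp
  | cons a s ih =>
    have ih := ih fun r hr => hs r (Multiset.mem_cons_of_mem hr)
    have ha := hs a (Multiset.mem_cons_self a s)
    simp only [Multiset.map_cons, Multiset.prod_cons]
    set P := (s.map fun r => y - r).prod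
    set Q := (s.map fun r => x - r).prod
    have h : (y - a) * P - (x - a) * Q = (x - a) * (P - Q) + (y - x) * (P - Q) + (y - x) * Q := by
      ring
    have hPQ : v (P - Q) ≤ v Q := ih.trans (mul_le_of_le_one_left zero_le hε)
    rw [h, map_mul]
    refine v.map_add_le (v.map_add_le ?_ ?_) ?_ <;> rw [map_mul]
    · calc v (x - a) * v (P - Q) ≤ v (x - a) * (ε * v Q) := by gcongr
        _ = _ := by ring
    · calc v (y - x) * v (P - Q) ≤ (ε * v (x - a)) * v Q := by gcongr
        _ = _ := by ring
    · calc v (y - x) * v Q ≤ (ε * v (x - a)) * v Q := by gcongr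
        _ = _ := by ring

lemma exists_lt_forall_le {α : Type*} (g : α → ℝ≥0) (δ : ℝ≥0) (s : Multiset α)
    (hs : ∀ r ∈ s, δ < g r) : ∃ ρ, δ < ρ ∧ ∀ r ∈ s, ρ ≤ g r := by
  induction s using Multiset.induction_on with
  | empty => exact ⟨δ + 1, by simp, by simp⟩
  | cons a s ih =>
    obtain ⟨ρ, h1, h2⟩ := ih fun r hr => hs r (Multiset.mem_cons_of_mem hr)
    refine ⟨min ρ (g a), lt_min h1 (hs a (Multiset.mem_cons_self a s)), fun r hr => ?_⟩
    rcases Multiset.mem_cons.1 hr with rfl | hr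
    · exact min_le_right _ _
    · exact (min_le_left _ _).trans (h2 r hr)

lemma val_multiset_sum_le {ι : Type*} (s : Multiset ι) (f : ι → Ω) (ε : ℝ≥0)
    (hs : ∀ i ∈ s, v (f i) ≤ ε) : v (s.map f).sum ≤ ε := by
  induction s using Multiset.induction_on with
  | empty => simp
  | cons a s ih =>
    simp only [Multiset.map_cons, Multiset.sum_cons]
    exact v.map_add_le (hs a (Multiset.mem_cons_self a s))
      (ih fun r hr => hs r (Multiset.mem_cons_of_mem hr))

end Valued

/-! ### Elements at unattained distance from `K` -/

section Approx

variable {K Ω : Type*} [Field K] [Field Ω] [Algebra K Ω] (v : Valuation Ω ℝ≥0)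

/-- `x` has positive distance `δ` from `K`, and no element of `K` attains this distance. In the
order-reversed additive notation: `v(x-K)` is bounded, has supremum `δ`, and no maximum. -/
def HasOpenDist (K : Type*) {Ω : Type*} [Field K] [Field Ω] [Algebra K Ω]
    (v : Valuation Ω ℝ≥0) (x : Ω) (δ : ℝ≥0) : Prop :=
  0 < δ ∧ (∀ c : K, δ < v (x - algebraMap K Ω c)) ∧
    ∀ ε, δ < ε → ∃ c : K, v (x - algebraMap K Ω c) < ε

variable {v}

lemma HasOpenDist.unique {x : Ω} {δ δ' : ℝ≥0} (h : HasOpenDist K v x δ)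
    (h' : HasOpenDist K v x δ') : δ = δ' := by
  refine le_antisymm (not_lt.1 fun hlt => ?_) (not_lt.1 fun hlt => ?_)
  · obtain ⟨c, hc⟩ := h'.2.2 _ hlt
    exact lt_asymm hc (h.2.1 c)
  · obtain ⟨c, hc⟩ := h.2.2 _ hlt
    exact lt_asymm hc (h'.2.1 c)

lemma HasOpenDist.congr {x y : Ω} {δ : ℝ≥0} (h : HasOpenDist K v x δ) (hy : v (y - x) ≤ δ) :
    HasOpenDist K v y δ := by
  have key : ∀ c : K, v (y - algebraMap K Ω c) = v (x - algebraMap K Ω c) := fun c => by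
    rw [← sub_add_sub_cancel y x]
    exact v.map_add_eq_of_lt_right (hy.trans_lt (h.2.1 c))
  exact ⟨h.1, fun c => key c ▸ h.2.1 c, fun ε hε => by simpa only [key] using h.2.2 ε hε⟩

lemma HasOpenDist.one_add_mul {x : Ω} {δ : ℝ≥0} (h : HasOpenDist K v x δ) {d : K} (hd : d ≠ 0) :
    HasOpenDist K v (1 + algebraMap K Ω d * x) (v (algebraMap K Ω d) * δ) := by
  have hd' : algebraMap K Ω d ≠ 0 := by simpa using hd
  have hv : 0 < v (algebraMap K Ω d) := v.pos_iff.2 hd'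
  have key : ∀ c : K, v (1 + algebraMap K Ω d * x - algebraMap K Ω (1 + d * c)) =
      v (algebraMap K Ω d) * v (x - algebraMap K Ω c) := fun c => by
    rw [← map_mul]; congr 1; simp; ring
  refine ⟨mul_pos hv h.1, fun c => ?_, fun ε hε => ?_⟩
  · have hc : c = 1 + d * ((c - 1) / d) := by field_simp; ring
    rw [hc, key]
    exact mul_lt_mul_of_pos_left (h.2.1 _) hv
  · obtain ⟨c, hc⟩ := h.2.2 (ε / v (algebraMap K Ω d)) ((lt_div_iff₀' hv).2 hε)
    exact ⟨1 + d * c, by rw [key]; exact (lt_div_iff₀' hv).1 hc⟩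

/-- The roots of a polynomial over `K` of degree less than `p` are farther than `δ` from `x`. If
`k ≥ 1` roots of `f` were within `δ` of `x`, then for `c : K` close to `x` the logarithmic
derivative of `f` at `c` would be close to `k / (c - x)`, and the modified Newton step
`c - k * f c / f' c` would give an element of `K` at distance at most `δ` from `x`. The bound on the
degree gives `k < p`, which makes `k` a unit. -/
lemma HasOpenDist.lt_root [IsAlgClosed Ω] {p : ℕ} [Fact p.Prime] (hmixed : v (p : Ω) < 1)
    {x : Ω} {δ : ℝ≥0} (h : HasOpenDist K v x δ) {f : K[X]} (hdeg : f.natDegree < p) {r : Ω}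
    (hr : r ∈ (f.map (algebraMap K Ω)).roots) : δ < v (x - r) := by
  by_contra! hrδ
  set F := f.map (algebraMap K Ω) with hF
  have hFsplit : F.Splits := IsAlgClosed.splits F
  have hF0 : F ≠ 0 := fun h0 => by simp [h0] at hr
  classical
  set near := F.roots.filter fun z => v (x - z) ≤ δ with hnear
  set far := F.roots.filter fun z => ¬ v (x - z) ≤ δ with hfar
  have hsplit : near + far = F.roots := Multiset.filter_add_not _ _
  obtain ⟨ρ', hρ', hfarρ⟩ := exists_lt_forall_le (fun z => v (x - z)) δ far fun z hz => by
    simpa using (Multiset.mem_filter.1 hz).2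
  have hρ'0 : 0 < ρ' := h.1.trans hρ'
  obtain ⟨c, hc⟩ := h.2.2 (NNReal.sqrt (δ * ρ'))
    ((lt_iff_lt_of_le_iff_le NNReal.sqrt_le_iff_le_sq).2 (by
      rw [sq]; exact mul_lt_mul_of_pos_left hρ' h.1))
  set ρ := v (x - algebraMap K Ω c) with hρ
  have hρδ : δ < ρ := h.2.1 c
  have hρ0 : 0 < ρ := h.1.trans hρδ
  have hρsq : ρ ^ 2 < δ * ρ' := (lt_iff_lt_of_le_iff_le NNReal.sqrt_le_iff_le_sq).1 hc
  have hρlt : ρ < ρ' := by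
    refine lt_of_pow_lt_pow_left₀ 2 hρ'0.le (hρsq.trans ?_)
    rw [sq]; exact mul_lt_mul_of_pos_right hρ' hρ'0
  set c' := algebraMap K Ω c with hc'
  have hcx : c' - x ≠ 0 := fun h0 => hρ0.ne' (by rw [hρ, ← neg_sub, h0, neg_zero, map_zero])
  have hvcx : v (c' - x) = ρ := v.map_sub_swap _ _
  -- `c` has distance exactly `ρ` from the near roots and at least `ρ'` from the far ones.
  have hnear_c : ∀ z ∈ near, v (c' - z) = ρ := fun z hz => by
    rw [← sub_add_sub_cancel c' x z, v.map_add_eq_of_lt_left, hvcx]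
    rw [hvcx]; exact ((Multiset.mem_filter.1 hz).2).trans_lt hρδ
  have hfar_c : ∀ z ∈ far, ρ' ≤ v (c' - z) := fun z hz => by
    rw [← sub_add_sub_cancel c' x z, v.map_add_eq_of_lt_right]
    · exact hfarρ z hz
    · rw [hvcx]; exact hρlt.trans_le (hfarρ z hz)
  have hFc : F.eval c' ≠ 0 := fun h0 => by
    have hmem : c' ∈ near + far := by rw [hsplit]; exact (mem_roots hF0).2 h0
    rcases Multiset.mem_add.1 hmem with hm | hm
    · have := hnear_c _ hm; rw [sub_self, map_zero] at this; exact hρ0.ne this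
    · have := hfar_c _ hm; rw [sub_self, map_zero] at this; exact hρ'0.not_ge this
  set ε := δ / ρ with hε
  have hε1 : ε < 1 := (div_lt_one hρ0).2 hρδ
  have hε2 : ρ / ρ' ≤ ε := by
    rw [hε, div_le_div_iff₀ hρ'0 hρ0, ← sq]; exact hρsq.le
  set t := eval c' (derivative F) / eval c' F with ht
  have htsum : t = (F.roots.map fun z => 1 / (c' - z)).sum :=
    hFsplit.eval_derivative_div_eval_of_ne_zero hFc
  -- Each near root contributes nearly `1 / (c - x)`, and the far ones contribute little.
  have hmain : v (t * (c' - x) - (Multiset.card near : Ω)) ≤ ε := by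
    have heq : t * (c' - x) - (Multiset.card near : Ω) =
        (near.map fun z => (z - x) / (c' - z)).sum + (far.map fun z => (c' - x) / (c' - z)).sum := by
      have h1 : (near.map fun z => (z - x) / (c' - z)).sum =
          (near.map fun z => (c' - x) * (1 / (c' - z))).sum - (Multiset.card near : Ω) := by
        have : near.map (fun z => (z - x) / (c' - z)) =
            near.map (fun z => (c' - x) * (1 / (c' - z)) - 1) := by
          refine Multiset.map_congr rfl fun z hz => ?_
          have hz0 : c' - z ≠ 0 := fun h0 => by
            have := hnear_c z hz; rw [h0, map_zero] at this; exact hρ0.ne this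
          field_simp
          ring
        rw [this, Multiset.sum_map_sub]
        simp
      rw [h1, htsum, ← hsplit, Multiset.map_add, Multiset.sum_add, Multiset.sum_map_mul_left]
      simp_rw [div_eq_mul_one_div (c' - x)]
      rw [Multiset.sum_map_mul_left]
      ring
    rw [heq]
    refine v.map_add_le (val_multiset_sum_le v _ _ _ fun z hz => ?_)
      (val_multiset_sum_le v _ _ _ fun z hz => ?_)
    · rw [map_div₀, hnear_c z hz, hε, v.map_sub_swap]
      gcongr
      exact (Multiset.mem_filter.1 hz).2
    · rw [map_div₀, hvcx]
      refine le_trans ?_ hε2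
      gcongr
      exact hfar_c z hz
  have hk0 : 0 < Multiset.card near :=
    Multiset.card_pos_iff_exists_mem.2 ⟨r, Multiset.mem_filter.2 ⟨hr, hrδ⟩⟩
  have hkp : Multiset.card near < p :=
    ((Multiset.card_le_card (Multiset.filter_le _ _)).trans (card_roots' F)).trans_lt
      (by rwa [hF, natDegree_map])
  have hvk := val_natCast_eq_one v hmixed hk0 hkp
  have hvt : v (t * (c' - x)) = 1 := by
    rw [← sub_add_cancel (t * (c' - x)) (Multiset.card near : Ω), v.map_add_eq_of_lt_right, hvk]
    rw [hvk]; exact hmain.trans_lt hε1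
  have ht0 : t ≠ 0 := fun h0 => by simp [h0] at hvt
  have hvt' : v t * ρ = 1 := by rw [← hvcx, ← map_mul, hvt]
  have htK : t = algebraMap K Ω (eval c (derivative f) / eval c f) := by
    rw [ht, hF, derivative_map, hc', eval_map_apply, eval_map_apply, map_div₀]
  -- The modified Newton step lands at distance at most `δ` from `x`.
  refine (h.2.1 (c - Multiset.card near / (eval c (derivative f) / eval c f))).not_ge ?_
  have hstep : x - algebraMap K Ω (c - Multiset.card near / (eval c (derivative f) / eval c f)) =
      -((t * (c' - x) - (Multiset.card near : Ω)) / t) := by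
    rw [map_sub, map_div₀, ← htK, map_natCast]
    field_simp
    ring
  rw [hstep, v.map_neg, map_div₀, div_le_iff₀ (v.pos_iff.2 ht0)]
  refine hmain.trans_eq ?_
  rw [hε, div_eq_iff hρ0.ne', mul_assoc, hvt', mul_one]

lemma val_aeval_sub_le [IsAlgClosed Ω] {x y : Ω} {ε : ℝ≥0} (hε : ε ≤ 1) (f : K[X])
    (hs : ∀ r ∈ (f.map (algebraMap K Ω)).roots, v (y - x) ≤ ε * v (x - r)) :
    v (aeval y f - aeval x f) ≤ ε * v (aeval x f) := by
  have hsplit : (f.map (algebraMap K Ω)).Splits := IsAlgClosed.splits _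
  rw [← eval_map_algebraMap, ← eval_map_algebraMap, hsplit.eval_eq_prod_roots,
    hsplit.eval_eq_prod_roots, ← mul_sub, map_mul, map_mul]
  calc _ ≤ _ * (ε * _) := by gcongr; exact val_prod_sub_prod_le v hε _ hs
    _ = _ := by ring

/-- A polynomial of degree less than `p` varies on the ball of radius `δ` around `x` at most at
relative speed `1 / δ`. -/
lemma HasOpenDist.val_aeval_sub_mul_le [IsAlgClosed Ω] {p : ℕ} [Fact p.Prime]
    (hmixed : v (p : Ω) < 1) {x y : Ω} {δ : ℝ≥0} (h : HasOpenDist K v x δ) (hy : v (y - x) ≤ δ)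
    {f : K[X]} (hdeg : f.natDegree < p) :
    v (aeval y f - aeval x f) * δ ≤ v (aeval x f) * v (y - x) := by
  have key := val_aeval_sub_le (v := v) (x := x) (y := y) (ε := v (y - x) / δ)
    ((div_le_one h.1).2 hy) f fun r hr => by
      rw [div_mul_eq_mul_div, le_div_iff₀ h.1]
      gcongr
      exact (h.lt_root hmixed hdeg hr).le
  calc _ ≤ v (y - x) / δ * v (aeval x f) * δ := by gcongr
    _ = _ := by field_simp [h.1.ne']

lemma HasOpenDist.exists_val_aeval_sub_lt [IsAlgClosed Ω] {p : ℕ} [Fact p.Prime]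
    (hmixed : v (p : Ω) < 1) {x : Ω} {δ : ℝ≥0} (h : HasOpenDist K v x δ)
    {f : K[X]} (hdeg : f.natDegree < p) (hf : aeval x f ≠ 0) :
    ∃ c : K, v (aeval x f - algebraMap K Ω c) < v (aeval x f) := by
  obtain ⟨ρ, hρ, hroots⟩ := exists_lt_forall_le (fun z => v (x - z)) δ _
    fun r hr => h.lt_root hmixed hdeg hr
  have hρ0 : 0 < ρ := h.1.trans hρ
  obtain ⟨c, hc⟩ := h.2.2 ρ hρ
  rw [v.map_sub_swap] at hc
  have hε : v (algebraMap K Ω c - x) / ρ < 1 := (div_lt_one hρ0).2 hc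
  have key := val_aeval_sub_le (v := v) (x := x) (y := algebraMap K Ω c) hε.le f fun r hr => by
      rw [div_mul_eq_mul_div, le_div_iff₀ hρ0]
      gcongr
      exact hroots r hr
  refine ⟨eval c f, ?_⟩
  rw [v.map_sub_swap, ← aeval_algebraMap_apply_eq_algebraMap_eval]
  exact key.trans_lt (mul_lt_of_lt_one_left (v.pos_iff.2 hf) hε)

end Approx

/-! ### Kummer extensions of degree `p` -/

section Extension

variable {K Ω : Type*} [Field K] [Field Ω] [Algebra K Ω] {v : Valuation Ω ℝ≥0} {p : ℕ}

open IntermediateField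

/-- A generator `θ` of a degree `p` Kummer extension, of distance `δ` from `K`, whose conjugates
all lie within `δ` of `θ`. -/
structure IsCloseKummerGen (K : Type*) {Ω : Type*} [Field K] [Field Ω] [Algebra K Ω]
    (v : Valuation Ω ℝ≥0) (p : ℕ) (θ : Ω) (δ : ℝ≥0) : Prop where
  one_unit : v (θ - 1) < 1
  pow_mem : θ ^ p ∈ Set.range (algebraMap K Ω)
  finrank_eq : Module.finrank K K⟮θ⟯ = p
  dist : HasOpenDist K v θ δ
  conj : ∀ σ : K⟮θ⟯ →ₐ[K] Ω, v (σ (AdjoinSimple.gen K θ) - θ) ≤ δ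

namespace IsCloseKummerGen

variable {θ : Ω} {δ : ℝ≥0}

lemma val_eq_one (h : IsCloseKummerGen K v p θ δ) : v θ = 1 := by
  rw [← sub_add_cancel θ 1, v.map_add_eq_of_lt_right, map_one]
  rw [map_one]; exact h.one_unit

lemma isIntegral [hp : Fact p.Prime] (h : IsCloseKummerGen K v p θ δ) : IsIntegral K θ := by
  obtain ⟨a, ha⟩ := h.pow_mem
  exact IsIntegral.of_pow hp.out.pos (ha ▸ isIntegral_algebraMap)

lemma exists_poly [Fact p.Prime] (h : IsCloseKummerGen K v p θ δ) (z : K⟮θ⟯) :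
    ∃ f : K[X], f.natDegree < p ∧ (z : Ω) = aeval θ f ∧
      ∀ σ : K⟮θ⟯ →ₐ[K] Ω, σ z = aeval (σ (AdjoinSimple.gen K θ)) f := by
  obtain ⟨f, hf, hz⟩ := (adjoin.powerBasis h.isIntegral).exists_eq_aeval z
  rw [adjoin.powerBasis_gen] at hz
  rw [adjoin.powerBasis_dim, ← adjoin.finrank h.isIntegral, h.finrank_eq] at hf
  refine ⟨f, hf, ?_, fun σ => ?_⟩
  · rw [hz]
    simp
  · rw [hz, aeval_algHom_apply]

lemma exists_val_sub_lt [IsAlgClosed Ω] [Fact p.Prime] (hmixed : v (p : Ω) < 1)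
    (h : IsCloseKummerGen K v p θ δ) {z : K⟮θ⟯} (hz : (z : Ω) ≠ 0) :
    ∃ c : K, v ((z : Ω) - algebraMap K Ω c) < v (z : Ω) := by
  obtain ⟨f, hf, hzf, -⟩ := h.exists_poly z
  rw [hzf] at hz ⊢
  exact h.dist.exists_val_aeval_sub_lt hmixed hf hz

lemma isImmediate [IsAlgClosed Ω] [Fact p.Prime] (hmixed : v (p : Ω) < 1)
    (h : IsCloseKummerGen K v p θ δ) : IsImmediate K Ω v K⟮θ⟯ := by
  refine ⟨fun z => ?_, fun z hz => ?_⟩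
  · by_cases h0 : (z : Ω) = 0
    · exact ⟨0, by simp [h0]⟩
    · obtain ⟨c, hc⟩ := h.exists_val_sub_lt hmixed h0
      refine ⟨c, ?_⟩
      rw [← sub_sub_cancel (z : Ω) (algebraMap K Ω c)]
      exact v.map_sub_eq_of_lt_left hc
  · rcases hz.lt_or_eq with hlt | heq
    · exact ⟨0, by simpa using hlt⟩
    · have h0 : (z : Ω) ≠ 0 := fun h0 => by simp [h0] at heq
      obtain ⟨c, hc⟩ := h.exists_val_sub_lt hmixed h0
      exact ⟨c, heq ▸ hc⟩

lemma val_conj_le [IsAlgClosed Ω] [Fact p.Prime] (hmixed : v (p : Ω) < 1)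
    (h : IsCloseKummerGen K v p θ δ) (σ : K⟮θ⟯ →ₐ[K] Ω) (z : K⟮θ⟯) : v (σ z) ≤ v (z : Ω) := by
  obtain ⟨f, hf, hz, hσ⟩ := h.exists_poly z
  rw [hz, hσ]
  have key := h.dist.val_aeval_sub_mul_le hmixed (h.conj σ) hf
  have key2 : v (aeval (σ (AdjoinSimple.gen K θ)) f - aeval θ f) ≤ v (aeval θ f) :=
    le_of_mul_le_mul_right (key.trans (by gcongr; exact h.conj σ)) h.dist.1
  rw [← sub_add_cancel (aeval (σ (AdjoinSimple.gen K θ)) f) (aeval θ f)]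
  exact v.map_add_le key2 le_rfl

/-- All conjugates of an element `z` of value at most `1` have value at most `1`, so `z` is
integral over the valuation ring of `K` and lies in every valuation ring above it. Since the
extension is immediate, no such valuation ring is larger than that of `v`. -/
lemma uniqueExtension [IsAlgClosed Ω] [Fact p.Prime] (hmixed : v (p : Ω) < 1)
    (h : IsCloseKummerGen K v p θ δ) : UniqueExtension K Ω v K⟮θ⟯ := by
  intro R hR
  have hRK : ∀ c : K, algebraMap K K⟮θ⟯ c ∈ R ↔ v (algebraMap K Ω c) ≤ 1 := fun c => by
    have := congrArg (fun S : Subring K => c ∈ S) hR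
    simpa [Valuation.mem_integer_iff] using this
  have : FiniteDimensional K K⟮θ⟯ := adjoin.finiteDimensional h.isIntegral
  have hle : ∀ z : K⟮θ⟯, v (z : Ω) ≤ 1 → z ∈ R := fun z hz => by
    have hint : IsIntegral K z := Algebra.IsIntegral.isIntegral z
    have hlift : (minpoly K z).map (algebraMap K Ω) ∈ lifts v.integer.subtype := by
      refine (IsAlgClosed.splits _).mem_lift_of_roots_mem_range ((minpoly.monic hint).map _) _ ?_
      intro r hr
      have hr' : r ∈ (minpoly K z).rootSet Ω := by
        classical
        rw [rootSet_def, aroots_def]; simpa using hr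
      rw [← Algebra.IsAlgebraic.range_eval_eq_rootSet_minpoly] at hr'
      obtain ⟨σ, rfl⟩ := hr'
      exact ⟨⟨σ z, (h.val_conj_le hmixed σ z).trans hz⟩, rfl⟩
    rw [lifts_iff_coeff_lifts] at hlift
    have hlift' : (minpoly K z).map (algebraMap K K⟮θ⟯) ∈ lifts R.subtype := by
      rw [lifts_iff_coeff_lifts]
      intro n
      obtain ⟨w, hw⟩ := hlift n
      rw [coeff_map] at hw ⊢
      refine ⟨⟨_, (hRK _).2 ?_⟩, rfl⟩
      rw [← hw]; exact w.2
    obtain ⟨q, hq, -, hqm⟩ := lifts_and_degree_eq_and_monic hlift' ((minpoly.monic hint).map _)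
    have hzint : IsIntegral R z := by
      refine ⟨q, hqm, ?_⟩
      rw [← eval_map]
      have : algebraMap R K⟮θ⟯ = R.subtype := rfl
      rw [this, hq, eval_map, ← aeval_def, minpoly.aeval]
    obtain ⟨w, rfl⟩ := IsIntegrallyClosed.isIntegral_iff.1 hzint
    exact w.2
  ext z
  rw [Valuation.mem_valuationSubring_iff]
  refine ⟨fun hz => ?_, hle z⟩
  by_contra! hlt
  change 1 < v (z : Ω) at hlt
  obtain ⟨c, hc⟩ := (h.isImmediate hmixed).1 z
  have hz0 : z ≠ 0 := fun h0 => by simp [h0] at hlt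
  have hu : algebraMap K K⟮θ⟯ c / z ∈ R := hle _ (by
    have : ((algebraMap K K⟮θ⟯ c / z : K⟮θ⟯) : Ω) = algebraMap K Ω c / z := by
      push_cast; rfl
    rw [this, map_div₀, hc]
    exact div_self_le_one _)
  have hcR : algebraMap K K⟮θ⟯ c ∈ R := by
    have := R.mul_mem _ _ hu hz
    rwa [div_mul_cancel₀ _ hz0] at this
  rw [hRK, hc] at hcR
  exact hcR.not_gt hlt

end IsCloseKummerGen

/-! ### Distances of Kummer generators -/

lemma val_sub_one_le_of_pow_eq_one [hp : Fact p.Prime] {μ ν : Ω} (hμ : μ ^ p = 1) (hμ1 : μ ≠ 1)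
    (hν : ν ^ p = 1) : v (ν - 1) ≤ v (μ - 1) := by
  have hprim : IsPrimitiveRoot μ p := orderOf_eq_prime hμ hμ1 ▸ IsPrimitiveRoot.orderOf μ
  have : NeZero p := ⟨hp.out.ne_zero⟩
  obtain ⟨i, -, rfl⟩ := hprim.eq_pow_of_pow_eq_one hν
  have hvμ : v μ = 1 := by
    rw [← pow_eq_one_iff_of_nonneg zero_le hp.out.ne_zero, ← map_pow, hμ, map_one]
  rw [← geom_sum_mul, map_mul]
  refine mul_le_of_le_one_left zero_le (v.map_sum_le fun j _ => ?_)
  rw [map_pow, hvμ, one_pow]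

/-- The distance of a generator from `K` depends only on the extension: for `f θ = θ' - c`, the
relative variation of `f` between `θ` and a conjugate is at most `v (σ θ - θ) / δ`, while
`v (σ θ' - θ') = v (σ θ - θ)` since both generators are multiplied by a primitive `p`-th root of
unity. -/
lemma IsCloseKummerGen.dist_le [IsAlgClosed Ω] [CharZero K] [hp : Fact p.Prime]
    (hmixed : v (p : Ω) < 1) {θ θ' : Ω} {δ δ' : ℝ≥0} (h : IsCloseKummerGen K v p θ δ)
    (h' : IsCloseKummerGen K v p θ' δ') (hE : K⟮θ⟯ = K⟮θ'⟯) : δ ≤ δ' := by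
  have : FiniteDimensional K K⟮θ⟯ := adjoin.finiteDimensional h.isIntegral
  have hcard : 1 < Fintype.card (K⟮θ⟯ →ₐ[K] Ω) := by
    rw [AlgHom.card, h.finrank_eq]; exact hp.out.one_lt
  have : Nontrivial (K⟮θ⟯ →ₐ[K] Ω) := Fintype.one_lt_card_iff_nontrivial.1 hcard
  obtain ⟨σ, hσ⟩ := exists_ne (K⟮θ⟯.val)
  have hθ' : θ' ∈ K⟮θ⟯ := hE ▸ mem_adjoin_simple_self K θ'
  have hσθ : σ (AdjoinSimple.gen K θ) ≠ θ := fun h0 => hσ <| by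
    refine algHom_ext_of_eq_adjoin K (S := K⟮θ⟯) (s := {θ}) rfl ?_
    rintro x rfl
    exact h0
  have hσθ' : σ ⟨θ', hθ'⟩ ≠ θ' := fun h0 => hσ <| by
    refine algHom_ext_of_eq_adjoin K hE ?_
    rintro x rfl
    exact h0
  have hroot : ∀ x : K⟮θ⟯, (x : Ω) ≠ 0 → (x : Ω) ^ p ∈ Set.range (algebraMap K Ω) →
      (σ x / x) ^ p = 1 := fun x hx ⟨a, ha⟩ => by
    have hxa : x ^ p = algebraMap K K⟮θ⟯ a := Subtype.ext (by simpa using ha.symm)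
    rw [div_pow, ← map_pow, hxa, AlgHom.commutes, ha, div_self (pow_ne_zero _ hx)]
  have hθ0 : θ ≠ 0 := fun h0 => by have := h.val_eq_one; simp [h0] at this
  have hθ'0 : θ' ≠ 0 := fun h0 => by have := h'.val_eq_one; simp [h0] at this
  have hμ := hroot (AdjoinSimple.gen K θ) hθ0 h.pow_mem
  have hν := hroot ⟨θ', hθ'⟩ hθ'0 h'.pow_mem
  have hμ1 : σ (AdjoinSimple.gen K θ) / θ ≠ 1 := fun h0 => hσθ ((div_eq_one_iff_eq hθ0).1 h0)
  have hν1 : σ ⟨θ', hθ'⟩ / θ' ≠ 1 := fun h0 => hσθ' ((div_eq_one_iff_eq hθ'0).1 h0)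
  have hval : ∀ x y : Ω, v y = 1 → y ≠ 0 → v (x / y - 1) = v (x - y) := fun x y hy hy0 => by
    rw [← div_self hy0, ← sub_div, map_div₀, hy, div_one]
  have hle : v (σ (AdjoinSimple.gen K θ) - θ) ≤ v (σ ⟨θ', hθ'⟩ - θ') := by
    rw [← hval _ _ h.val_eq_one hθ0, ← hval _ _ h'.val_eq_one hθ'0]
    exact val_sub_one_le_of_pow_eq_one hν hν1 hμ
  have hpos : 0 < v (σ (AdjoinSimple.gen K θ) - θ) := v.pos_iff.2 (sub_ne_zero.2 hσθ)
  by_contra! hlt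
  obtain ⟨c, hc⟩ := h'.dist.2.2 δ hlt
  obtain ⟨f, hf, hz, hσf⟩ := h.exists_poly (⟨θ', hθ'⟩ - algebraMap K K⟮θ⟯ c)
  have hz' : aeval θ f = θ' - algebraMap K Ω c := by rw [← hz]; push_cast; rfl
  have hσz : aeval (σ (AdjoinSimple.gen K θ)) f = σ ⟨θ', hθ'⟩ - algebraMap K Ω c := by
    rw [← hσf, map_sub, AlgHom.commutes]
  have key := h.dist.val_aeval_sub_mul_le hmixed (h.conj σ) hf
  rw [hz', hσz, sub_sub_sub_cancel_right] at key
  refine (lt_of_le_of_lt key ?_).not_ge (le_refl _)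
  calc _ < δ * v (σ (AdjoinSimple.gen K θ) - θ) := by gcongr
    _ ≤ δ * v (σ ⟨θ', hθ'⟩ - θ') := by gcongr
    _ = _ := mul_comm _ _

/-- The `p`-th roots of `1 + d ^ p * η ^ p` are congruent to `1 + d * η` modulo a `p`-th root of
`p`, hence have the same distance from `K` as `1 + d * η`. -/
lemma exists_isCloseKummerGen [IsAlgClosed Ω] [hp : Fact p.Prime] (hmixed : v (p : Ω) < 1)
    {η : Ω} {δ : ℝ≥0} (h : HasOpenDist K v η δ) (hη : v η ≤ 1)
    (hηp : η ^ p ∈ Set.range (algebraMap K Ω)) {d : K} (hd0 : d ≠ 0)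
    (hd1 : v (algebraMap K Ω d) < 1) (hpd : v (p : Ω) < (v (algebraMap K Ω d) * δ) ^ p) :
    ∃ θ : Ω, IsCloseKummerGen K v p θ (v (algebraMap K Ω d) * δ) := by
  obtain ⟨a, ha⟩ := hηp
  have hdη : v (algebraMap K Ω d * η) < 1 := by
    rw [map_mul]; exact (mul_le_of_le_one_right zero_le hη).trans_lt hd1
  have hdist := h.one_add_mul hd0
  set δ' := v (algebraMap K Ω d) * δ
  set x := 1 + algebraMap K Ω d * η with hx
  have hx1 : v x ≤ 1 := v.map_add_le (map_one v).le hdη.le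
  set b : K := 1 + d ^ p * a with hb
  have hxb : v (x ^ p - algebraMap K Ω b) ≤ v (p : Ω) := by
    let w : v.integer := ⟨algebraMap K Ω d * η, hdη.le⟩
    obtain ⟨r, hr⟩ := exists_add_pow_prime_eq hp.out (1 : v.integer) w
    have hr' := congrArg Subtype.val hr
    have : x ^ p - algebraMap K Ω b = p * ((w * r : v.integer) : Ω) := by
      simp [w] at hr'
      simp [hb, ha, hx, w]
      linear_combination hr'
    rw [this, map_mul]
    exact mul_le_of_le_one_right zero_le (w * r).2
  have hb1 : v (algebraMap K Ω b) ≤ 1 := by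
    rw [hb, map_add, map_mul, ha, map_one, map_pow, ← mul_pow]
    refine v.map_add_le (map_one v).le ?_
    rw [map_pow]; exact pow_le_one₀ zero_le hdη.le
  have hroot1 : ∀ y : Ω, y ^ p = algebraMap K Ω b → v y ≤ 1 := fun y hy => by
    rwa [← pow_le_one_iff_of_nonneg zero_le hp.out.ne_zero, ← map_pow, hy]
  have hroot : ∀ y : Ω, y ^ p = algebraMap K Ω b → v (y - x) ^ p ≤ v (p : Ω) := fun y hy => by
    refine (val_sub_pow_le v (p := p) (hroot1 y hy) hx1).trans (max_le ?_ le_rfl)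
    rw [hy, v.map_sub_swap]; exact hxb
  have hlt : ∀ y : Ω, v y ^ p ≤ v (p : Ω) → v y ≤ δ' := fun y hy =>
    (lt_of_pow_lt_pow_left₀ p zero_le (hy.trans_lt hpd)).le
  have hirr : Irreducible (X ^ p - C b) := by
    refine X_pow_sub_C_irreducible_of_prime hp.out fun k hk => ?_
    have := hlt _ (hroot (algebraMap K Ω k) (by rw [← map_pow, hk]))
    rw [v.map_sub_swap] at this
    exact (hdist.2.1 k).not_ge this
  obtain ⟨θ, hθ⟩ := IsAlgClosed.exists_pow_nat_eq (algebraMap K Ω b) hp.out.pos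
  have hθint : IsIntegral K θ := IsIntegral.of_pow hp.out.pos (hθ ▸ isIntegral_algebraMap)
  refine ⟨θ, ?_, ⟨b, hθ.symm⟩, ?_, hdist.congr (hlt _ (hroot θ hθ)), fun σ => hlt _ ?_⟩
  · have h1 : v (θ - x) < 1 := by
      rw [← pow_lt_one_iff_of_nonneg zero_le hp.out.ne_zero]
      exact (hroot θ hθ).trans_lt hmixed
    have h2 : θ - 1 = (θ - x) + algebraMap K Ω d * η := by rw [hx]; ring
    rw [h2]; exact v.map_add_lt h1 hdη
  · rw [adjoin.finrank hθint, ← minpoly.eq_of_irreducible_of_monic hirr (by simp [hθ])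
      (monic_X_pow_sub_C b hp.out.ne_zero), natDegree_X_pow_sub_C]
  · have hσ : (σ (AdjoinSimple.gen K θ)) ^ p = algebraMap K Ω b := by
      rw [← map_pow, ← σ.commutes]
      exact congrArg σ (Subtype.ext (by simpa using hθ))
    refine (val_sub_pow_le v (p := p) (hroot1 _ hσ) (hroot1 _ hθ)).trans (max_le ?_ le_rfl)
    rw [hσ, hθ, sub_self, map_zero]; exact zero_le

lemma IsCloseKummerGen.isKummerSuperDependent [IsAlgClosed Ω] [hp : Fact p.Prime]
    (hmixed : v (p : Ω) < 1) {θ : Ω} {δ β : ℝ≥0} (h : IsCloseKummerGen K v p θ δ) (hβδ : β ≤ δ)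
    (hβ : v (p : Ω) < β ^ p) {n : ℕ} (hn : 0 < n) (hβn : β ^ n ∈ valueGroup K Ω v) :
    IsKummerSuperDependent K Ω v p K⟮θ⟯ := by
  have hβc : ∀ c : K, β ≤ v (θ - algebraMap K Ω c) := fun c => hβδ.trans (h.dist.2.1 c).le
  refine ⟨θ, rfl, ?_, h.pow_mem, h.finrank_eq, h.one_unit, h.isImmediate hmixed,
    h.uniqueExtension hmixed, fun c => hβ.trans_le ?_, β, ⟨n, hn, hβn⟩, hβc, hβ⟩
  · rintro ⟨c, rfl⟩
    have := h.dist.2.1 c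
    simp at this
  · have := hβc c
    gcongr

/-- In an immediate extension no element of `K` is at minimal distance from `η`. -/
lemma hasOpenDist_of_isImmediate {η : Ω} {E : IntermediateField K Ω} (hE : IsImmediate K Ω v E)
    (hη : η ∈ E) {β : ℝ≥0} (hβ0 : 0 < β) (hβ : ∀ c : K, β ≤ v (η - algebraMap K Ω c)) :
    HasOpenDist K v η (⨅ c : K, v (η - algebraMap K Ω c)) := by
  refine ⟨hβ0.trans_le (le_ciInf hβ), fun c => ?_, fun ε hε => exists_lt_of_ciInf_lt hε⟩
  obtain ⟨k, hk⟩ := hE.1 (⟨η, hη⟩ - algebraMap K E c)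
  change v (algebraMap K Ω k) = v (η - algebraMap K Ω c) at hk
  have hpos : 0 < v (algebraMap K Ω k) := hk ▸ hβ0.trans_le (hβ c)
  have hk0 : algebraMap K Ω k ≠ 0 := v.pos_iff.1 hpos
  obtain ⟨e, he⟩ := hE.2 ((⟨η, hη⟩ - algebraMap K E c) / algebraMap K E k) (by
    change v ((η - algebraMap K Ω c) / algebraMap K Ω k) ≤ 1
    rw [map_div₀, hk]; exact div_self_le_one _)
  change v ((η - algebraMap K Ω c) / algebraMap K Ω k - algebraMap K Ω e) < 1 at he
  refine (ciInf_le (OrderBot.bddBelow _) (c + k * e)).trans_lt ?_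
  have : η - algebraMap K Ω (c + k * e) =
      algebraMap K Ω k * ((η - algebraMap K Ω c) / algebraMap K Ω k - algebraMap K Ω e) := by
    rw [map_add, map_mul]; field_simp; ring
  rw [this, map_mul, ← hk]
  exact mul_lt_of_lt_one_right hpos he

/-- Quotients of the values `v (η - c)` close to the unattained distance `δ` are values of
elements of `K` that approach `1` from below. -/
lemma exists_val_between {η : Ω} {E : IntermediateField K Ω} (hE : IsImmediate K Ω v E)
    (hη : η ∈ E) {δ : ℝ≥0} (h : HasOpenDist K v η δ) {t : ℝ≥0} (ht : t < 1) :
    ∃ d : K, t < v (algebraMap K Ω d) ∧ v (algebraMap K Ω d) < 1 := by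
  have hval : ∀ c : K, ∃ k : K, v (algebraMap K Ω k) = v (η - algebraMap K Ω c) := fun c =>
    hE.1 (⟨η, hη⟩ - algebraMap K E c)
  obtain ⟨c, hc⟩ : ∃ c : K, t * v (η - algebraMap K Ω c) < δ := by
    rcases eq_or_ne t 0 with rfl | ht0
    · exact ⟨0, by simpa using h.1⟩
    · have ht0 := pos_iff_ne_zero.2 ht0
      obtain ⟨c, hc⟩ := h.2.2 (δ / t) ((lt_div_iff₀ ht0).2 (mul_lt_of_lt_one_right h.1 ht))
      exact ⟨c, (lt_div_iff₀' ht0).1 hc⟩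
  obtain ⟨c', hc'⟩ := h.2.2 _ (h.2.1 c)
  obtain ⟨k, hk⟩ := hval c
  obtain ⟨k', hk'⟩ := hval c'
  have hpos : 0 < v (η - algebraMap K Ω c) := h.1.trans (h.2.1 c)
  refine ⟨k' / k, ?_, ?_⟩ <;> rw [map_div₀, map_div₀, hk, hk']
  · exact (lt_div_iff₀ hpos).2 (hc.trans (h.2.1 c'))
  · exact (div_lt_one hpos).2 hc'

end Extension

/-! ### Infinitely many extensions -/

/-- Let `(K,v)` be a valued field of mixed characteristic
(`char K = 0`, `char Kv = p > 0`, the latter rendered as `v p < 1`) of rank `1`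
(rendered by a nontrivial valuation with values in `ℝ≥0`) which contains a primitive
`p`-th root of unity.  If `(K,v)` admits a Kummer extension of degree `p` with
super-dependent defect, then it admits infinitely many distinct Kummer extensions of
degree `p` with super-dependent defect.  All extensions are taken inside a fixed
algebraic closure `Ω` of `K`, equipped with an extension of the valuation. -/
theorem statement2 {K Ω : Type*} [Field K] [Field Ω] [Algebra K Ω] [IsAlgClosure K Ω]
    [CharZero K] (v : Valuation Ω ℝ≥0) (p : ℕ) [Fact p.Prime]
    (hmixed : v ((p : ℕ) : Ω) < 1)
    (hrank1 : ∃ x : K, x ≠ 0 ∧ v (algebraMap K Ω x) ≠ 1)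
    (hzeta : ∃ ζ : K, IsPrimitiveRoot ζ p)
    (hex : ∃ E : IntermediateField K Ω, IsKummerSuperDependent K Ω v p E) :
    {E : IntermediateField K Ω | IsKummerSuperDependent K Ω v p E}.Infinite := by
  have : IsAlgClosed Ω := IsAlgClosure.isAlgClosed K
  have hp : p.Prime := Fact.out
  obtain ⟨E, η, hEη, -, hηp, -, hη1, himm, -, -, β, ⟨n, hn, g, hg0, hg⟩, hβ, hβp⟩ := hex
  have hβ0 : 0 < β := pos_iff_ne_zero.2 fun h0 => by
    simp [h0, hp.ne_zero] at hβp
  have hηE : η ∈ E := hEη ▸ IntermediateField.mem_adjoin_simple_self K η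
  have hdist := hasOpenDist_of_isImmediate himm hηE hβ0 hβ
  set δ := ⨅ c : K, v (η - algebraMap K Ω c)
  have hβδ : β ≤ δ := le_ciInf hβ
  have hηle : v η ≤ 1 := by
    rw [← sub_add_cancel η 1]; exact v.map_add_le hη1.le (map_one v).le
  -- `(t₀ * β) ^ p = v p`, so every `γ > t₀` satisfies `v p < (γ * β) ^ p`.
  set t₀ : ℝ≥0 := v (p : Ω) ^ (1 / p : ℝ) / β with ht₀
  have ht₀p : (t₀ * β) ^ p = v (p : Ω) := by
    rw [ht₀, div_mul_cancel₀ _ hβ0.ne', one_div, NNReal.rpow_inv_natCast_pow _ hp.ne_zero]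
  have ht₀1 : t₀ < 1 := by
    refine lt_of_mul_lt_mul_right ?_ hβ0.le
    refine lt_of_pow_lt_pow_left₀ p zero_le ?_
    rwa [ht₀p, one_mul]
  let Γ : Set ℝ≥0 := {γ | t₀ < γ ∧ γ < 1 ∧ ∃ d : K, v (algebraMap K Ω d) = γ}
  have hΓ : Γ.Infinite := fun hfin => by
    obtain ⟨d, hd, hd1⟩ := exists_val_between himm hηE hdist ht₀1
    obtain ⟨γ, hγ, hmax⟩ := Set.exists_max_image Γ id hfin ⟨_, hd, hd1, d, rfl⟩
    obtain ⟨d', hd', hd1'⟩ := exists_val_between himm hηE hdist hγ.2.1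
    exact hd'.not_ge (hmax _ ⟨hγ.1.trans hd', hd1', d', rfl⟩)
  have hlt : ∀ γ ∈ Γ, v (p : Ω) < (γ * β) ^ p := fun γ hγ => by
    rw [← ht₀p]
    exact pow_lt_pow_left₀ (mul_lt_mul_of_pos_right hγ.1 hβ0) zero_le hp.ne_zero
  have hgen : ∀ γ, ∃ θ : Ω, γ ∈ Γ → IsCloseKummerGen K v p θ (γ * δ) := fun γ => by
    by_cases hγ : γ ∈ Γ
    · obtain ⟨h0, h1, d, rfl⟩ := id hγ
      have hd0 : d ≠ 0 := fun h => by simp [h] at h0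
      obtain ⟨θ, hθ⟩ := exists_isCloseKummerGen hmixed hdist hηle hηp hd0 h1
        ((hlt _ hγ).trans_le (by gcongr))
      exact ⟨θ, fun _ => hθ⟩
    · exact ⟨0, fun h => absurd h hγ⟩
  choose θ hθ using hgen
  refine Set.infinite_of_injOn_mapsTo (f := fun γ => IntermediateField.adjoin K {θ γ})
    (s := Γ) ?_ ?_ hΓ
  · intro γ hγ γ' hγ' heq
    have h1 := (hθ γ hγ).dist_le hmixed (hθ γ' hγ') heq
    have h2 := (hθ γ' hγ').dist_le hmixed (hθ γ hγ) heq.symm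
    exact mul_right_cancel₀ hdist.1.ne' (le_antisymm h1 h2)
  · intro γ hγ
    obtain ⟨h0, h1, d, rfl⟩ := id hγ
    have hd0 : d ≠ 0 := fun h => by simp [h] at h0
    refine (hθ _ hγ).isKummerSuperDependent hmixed (β := v (algebraMap K Ω d) * β) (by gcongr)
      (hlt _ hγ) hn ⟨d ^ n * g, mul_ne_zero (pow_ne_zero _ hd0) hg0, ?_⟩
    rw [map_mul, map_mul, map_pow, map_pow, hg, mul_pow]

end Statement2
end

section
/- Let (K,v) be a nontrivially valued field of characteristic p > 0, with completion K^c and valuation ring O_{K^c} of the completion. Then the following are equivalent: (i) the value group vK is p-divisible and the map x ↦ x^p on O_{K^c}/pO_{K^c} is surjective; (ii) the map x ↦ x^p on O_{K^c}/pO_{K^c} is surjective; (iii) the completion K^c is a perfect field; (iv) K is dense in its perfect hull K^{1/p^∞}; (v) K^p is dense in K. -/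
/-! In characteristic `p` the Frobenius satisfies `v (x - y) ^ p = v (x ^ p - y ^ p)`, so
approximating `x ^ p` by `c ^ p` up to `v b ^ p` is the same as approximating `x` by `c` up to
`v b`.  Together with the cofinality of the `p`-th powers among the small values
(`exists_pow_le`) this gives all the implications between density statements.

For "`K^p` dense in `K` implies `K^c` perfect", the same identity makes the Frobenius of `K^c`
a uniform embedding, so that its range is complete, hence closed; it is dense because it contains
`K^p`, so it is everything.  The `p`-divisibility of `vK` in (i) is automatic because `K` and
`K^c` have the same value group.  Passing to `x⁻¹` reduces surjectivity of the
Frobenius on `K^c` to surjectivity on its valuation ring.  Finally (v) is iterated to make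
`K^{p^n}` dense in `K` (`dense_pow_pow`), which is what (iv) requires for an element `x`
with `x ^ p ^ n ∈ K`. -/

section Helpers

open Topology UniformSpace

/-- The values of `N`-th powers are cofinal among the small nonzero values. -/
lemma exists_pow_le {K : Type*} [Field K] {Γ : Type*} [LinearOrderedCommGroupWithZero Γ]
    (v : Valuation K Γ) {N : ℕ} (hN : N ≠ 0) {b : K} (hb : b ≠ 0) :
    ∃ d : K, d ≠ 0 ∧ v d ^ N ≤ v b := by
  rcases le_total (v b) 1 with h | h
  · exact ⟨b, hb, pow_le_of_le_one zero_le h hN⟩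
  · exact ⟨1, one_ne_zero, by simpa using h⟩

/-- Neighbourhoods in a valued field are described by values of nonzero field elements. -/
lemma valued_mem_nhds_iff {L : Type*} [Field L] {Γ : Type*} [LinearOrderedCommGroupWithZero Γ]
    [hv : Valued L Γ] {s : Set L} {x : L} :
    s ∈ 𝓝 x ↔ ∃ b : L, b ≠ 0 ∧ {y | hv.v (y - x) < hv.v b} ⊆ s := by
  rw [Valued.mem_nhds]
  constructor
  · rintro ⟨γ, h⟩
    obtain ⟨b, hb⟩ := MonoidWithZeroHom.ValueGroup₀.restrict₀_surjective (.ofClass hv.v) γ.1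
    refine ⟨b, ?_, fun y hy => h ?_⟩
    · rintro rfl
      exact γ.ne_zero (by rw [← hb]; exact map_zero _)
    · change hv.v.restrict (y - x) < γ.1
      rw [← hb]
      exact hv.v.restrict_lt_iff.mpr hy
  · rintro ⟨b, hb, h⟩
    refine ⟨Units.mk0 (hv.v.restrict b) ((Valuation.ne_zero_iff _).mpr hb), fun y hy => h ?_⟩
    exact hv.v.restrict_lt_iff.mp hy

variable {K : Type*} [Field K] {Γ : Type*} [LinearOrderedCommGroupWithZero Γ] [val : Valued K Γ]

/-- Elements of the completion are approximated by elements of `K`. -/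
lemma exists_coe_sub_lt (x : Completion K) {b : Completion K} (hb : b ≠ 0) :
    ∃ c : K, Valued.v (x - (c : Completion K)) < (Valued.v b : Γ) := by
  have h : {y : Completion K | Valued.v (y - x) < (Valued.v b : Γ)} ∈ 𝓝 x :=
    valued_mem_nhds_iff.mpr ⟨b, hb, subset_rfl⟩
  obtain ⟨c, hc⟩ := Completion.denseRange_coe.mem_nhds h
  exact ⟨c, by rw [Valuation.map_sub_swap]; exact hc⟩

/-- The completion has the same nonzero values as `K`. -/
lemma exists_coe_valued_eq (x : Completion K) :
    ∃ r : K, (Valued.v x : Γ) = Valued.v r :=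
  Valued.exists_coe_eq_v x

lemma coe_sub_pow (a c : K) (p : ℕ) :
    ((a - c ^ p : K) : Completion K) = (a : Completion K) - (c : Completion K) ^ p :=
  (map_sub (Completion.coeRingHom : K →+* Completion K) a (c ^ p)).trans (by rw [map_pow]; rfl)

lemma charP_completion (p : ℕ) [CharP K p] : CharP (Completion K) p :=
  charP_of_injective_ringHom (f := (Completion.coeRingHom : K →+* Completion K))
    (RingHom.injective _) p

/-- If `K ^ p` is dense in `K`, so is `K ^ (p ^ n)`. -/
lemma dense_pow_pow {K : Type*} [Field K] {Γ : Type*} [LinearOrderedCommGroupWithZero Γ]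
    (v : Valuation K Γ) (p : ℕ) [Fact p.Prime] [CharP K p]
    (h : ∀ a b : K, b ≠ 0 → ∃ c : K, v (a - c ^ p) < v b) (n : ℕ) (a b : K) (hb : b ≠ 0) :
    ∃ c : K, v (a - c ^ p ^ n) < v b := by
  induction n with
  | zero => exact ⟨a, by simpa [zero_lt_iff] using hb⟩
  | succ n ih =>
    obtain ⟨c, hc⟩ := ih
    have hN : p ^ n ≠ 0 := pow_ne_zero _ (Fact.out : p.Prime).ne_zero
    obtain ⟨d, hd, hdb⟩ := exists_pow_le v hN hb
    obtain ⟨e, he⟩ := h c d hd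
    refine ⟨e, ?_⟩
    have h1 : a - e ^ p ^ (n + 1) = (a - c ^ p ^ n) + (c - e ^ p) ^ p ^ n := by
      rw [sub_pow_char_pow, ← pow_mul, ← pow_succ']
      ring
    rw [h1]
    refine v.map_add_lt hc ?_
    rw [map_pow]
    exact (pow_lt_pow_left₀ he zero_le hN).trans_le hdb

/-- In characteristic `p` a valued field carries the uniformity induced by its Frobenius:
the preimage of the ball of radius `v b ^ p` is the ball of radius `v b`. -/
lemma isUniformInducing_frobenius {L : Type*} [Field L] {Γ : Type*}
    [LinearOrderedCommGroupWithZero Γ] [hv : Valued L Γ] (p : ℕ) [Fact p.Prime] [CharP L p] :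
    IsUniformInducing (frobenius L p) := by
  have hp : p ≠ 0 := (Fact.out : p.Prime).ne_zero
  have key (x y : L) : hv.v (frobenius L p y - frobenius L p x) = hv.v (y - x) ^ p := by
    rw [← map_sub, frobenius_def, map_pow]
  refine AddMonoidHom.isUniformInducing_of_isInducing (f := (frobenius L p : L →+ L)) ?_
  refine isInducing_iff_nhds.mpr fun x => Filter.ext fun s => ?_
  rw [Filter.mem_comap, valued_mem_nhds_iff]
  constructor
  · rintro ⟨b, hb, hs⟩
    refine ⟨{z | hv.v (z - frobenius L p x) < hv.v (b ^ p)},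
      valued_mem_nhds_iff.mpr ⟨b ^ p, pow_ne_zero _ hb, subset_rfl⟩, fun y hy => hs ?_⟩
    change hv.v (frobenius L p y - frobenius L p x) < hv.v (b ^ p) at hy
    rw [key, map_pow] at hy
    exact lt_of_pow_lt_pow_left₀ p zero_le hy
  · rintro ⟨t, ht, hts⟩
    obtain ⟨b, hb, hbt⟩ := valued_mem_nhds_iff.mp ht
    obtain ⟨d, hd, hdb⟩ := exists_pow_le hv.v hp hb
    refine ⟨d, hd, fun y hy => hts (hbt ?_)⟩
    change hv.v (frobenius L p y - frobenius L p x) < hv.v b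
    rw [key]
    exact (pow_lt_pow_left₀ hy zero_le hp).trans_le hdb

/-- If `K ^ p` is dense in `K`, the range of the Frobenius of the completion is dense and
complete, so the completion is perfect. -/
lemma completion_perfect (p : ℕ) [Fact p.Prime] [CharP K p]
    (h : ∀ a b : K, b ≠ 0 → ∃ c : K, (Valued.v (a - c ^ p) : Γ) < Valued.v b)
    (x : Completion K) : ∃ y : Completion K, y ^ p = x := by
  have := charP_completion (K := K) p
  have hcl : IsClosed (Set.range (frobenius (Completion K) p)) :=
    (isUniformInducing_frobenius p).isComplete_range.isClosed
  have hx : x ∈ closure (Set.range (frobenius (Completion K) p)) := by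
    rw [mem_closure_iff_nhds]
    intro s hs
    obtain ⟨b, hb, hbs⟩ := valued_mem_nhds_iff.mp hs
    obtain ⟨r, hr⟩ := exists_coe_valued_eq b
    have hr0 : r ≠ 0 := by
      rintro rfl
      exact hb (by simpa using hr)
    obtain ⟨a, ha⟩ := exists_coe_sub_lt x hb
    obtain ⟨c, hc⟩ := h a r hr0
    refine ⟨(c : Completion K) ^ p, hbs ?_, ⟨c, rfl⟩⟩
    have h1 : x - (c : Completion K) ^ p = (x - a) + ((a - c ^ p : K) : Completion K) := by
      rw [coe_sub_pow]
      ring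
    change Valued.v _ < _
    rw [Valuation.map_sub_swap, h1]
    refine Valuation.map_add_lt _ ha ?_
    rw [Valued.valuedCompletion_apply, hr]
    exact hc
  rw [hcl.closure_eq] at hx
  exact hx

end Helpers


/-- Let `(K,v)` be a nontrivially valued field of characteristic
`p > 0`, with completion `K^c` and valuation ring `O_{K^c}` of the completion (note that
in characteristic `p` one has `p·O_{K^c} = {0}`, so `O_{K^c}/pO_{K^c} = O_{K^c}`).
Then the following are equivalent:
(i)   `vK` is `p`-divisible and `x ↦ x^p` on `O_{K^c}` is surjective;
(ii)  `x ↦ x^p` on `O_{K^c}` is surjective;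
(iii) `K^c` is a perfect field (Frobenius is surjective);
(iv)  `K` is dense in its perfect hull `K^{1/p^∞}`;
(v)   `K^p` is dense in `K`.

The completion is `UniformSpace.Completion K` for the valuation uniformity (Mathlib's
`Valued` class), carrying the canonical extension of the valuation.  The perfect hull is
taken inside a fixed algebraic closure `Ω` of `K`, equipped with a valuation `w` whose
restriction to `K` is equivalent to `v`; density statements are with respect to the
valuation topology, i.e. approximation below every nonzero value of `vK`
(multiplicative notation, order reversed). -/
theorem statement3 {K : Type*} [Field K] {Γ : Type*} [LinearOrderedCommGroupWithZero Γ]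
    [val : Valued K Γ] (p : ℕ) [Fact p.Prime] [CharP K p]
    (hnontriv : ∃ x : K, x ≠ 0 ∧ Valued.v x ≠ (1 : Γ))
    {Ω : Type*} [Field Ω] [Algebra K Ω] [IsAlgClosure K Ω]
    {Γ' : Type*} [LinearOrderedCommGroupWithZero Γ'] (w : Valuation Ω Γ')
    (hw : (w.comap (algebraMap K Ω)).IsEquiv val.v) :
    List.TFAE [
      -- (i) the value group vK is p-divisible and Frobenius is onto on O_{K^c}
      (∀ x : K, x ≠ 0 → ∃ y : K, (Valued.v y : Γ) ^ p = Valued.v x) ∧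
        (∀ x : UniformSpace.Completion K, Valued.v x ≤ (1 : Γ) →
          ∃ y : UniformSpace.Completion K, Valued.v y ≤ (1 : Γ) ∧ y ^ p = x),
      -- (ii) Frobenius is onto on O_{K^c}
      (∀ x : UniformSpace.Completion K, Valued.v x ≤ (1 : Γ) →
        ∃ y : UniformSpace.Completion K, Valued.v y ≤ (1 : Γ) ∧ y ^ p = x),
      -- (iii) the completion K^c is a perfect field
      (∀ x : UniformSpace.Completion K, ∃ y : UniformSpace.Completion K, y ^ p = x),
      -- (iv) K is dense in its perfect hull K^{1/p^∞}
      (∀ x : Ω, (∃ n : ℕ, x ^ p ^ n ∈ Set.range (algebraMap K Ω)) →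
        ∀ γ : Γ', (∃ b : K, b ≠ 0 ∧ w (algebraMap K Ω b) = γ) →
          ∃ c : K, w (x - algebraMap K Ω c) < γ),
      -- (v) K^p is dense in K
      (∀ a : K, ∀ γ : Γ, (∃ b : K, b ≠ 0 ∧ Valued.v b = γ) →
        ∃ c : K, Valued.v (a - c ^ p) < γ)
    ] := by
  have hp : p ≠ 0 := (Fact.out : p.Prime).ne_zero
  have := charP_completion (K := K) p
  have : CharP Ω p := charP_of_injective_algebraMap (algebraMap K Ω).injective p
  have : IsAlgClosed Ω := IsAlgClosure.isAlgClosed K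
  tfae_have 1 → 2 := fun h => h.2
  tfae_have 2 → 3 := by
    intro h x
    rcases le_total (Valued.v x) (1 : Γ) with hx | hx
    · obtain ⟨y, -, hy⟩ := h x hx
      exact ⟨y, hy⟩
    · obtain ⟨y, -, hy⟩ := h x⁻¹ (by rw [map_inv₀]; exact inv_le_one_of_one_le₀ hx)
      exact ⟨y⁻¹, by rw [inv_pow, hy, inv_inv]⟩
  tfae_have 3 → 1 := by
    intro h
    constructor
    · intro x _
      obtain ⟨y, hy⟩ := h x
      obtain ⟨r, hr⟩ := exists_coe_valued_eq y
      exact ⟨r, by rw [← hr, ← map_pow, hy, Valued.valuedCompletion_apply]⟩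
    · intro x hx
      obtain ⟨y, rfl⟩ := h x
      rw [map_pow] at hx
      exact ⟨y, (pow_le_one_iff hp).mp hx, rfl⟩
  tfae_have 3 → 5 := by
    rintro h a _ ⟨b, hb, rfl⟩
    obtain ⟨y, hy⟩ := h a
    obtain ⟨d, hd, hdb⟩ := exists_pow_le val.v hp hb
    have hd' : (d : UniformSpace.Completion K) ≠ 0 :=
      (map_ne_zero (UniformSpace.Completion.coeRingHom : K →+* UniformSpace.Completion K)).mpr hd
    obtain ⟨c, hc⟩ := exists_coe_sub_lt y hd'
    refine ⟨c, ?_⟩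
    have h1 : ((a - c ^ p : K) : UniformSpace.Completion K) = (y - c) ^ p := by
      rw [sub_pow_char, hy, coe_sub_pow]
    rw [← Valued.valuedCompletion_apply, h1, map_pow]
    rw [Valued.valuedCompletion_apply] at hc
    exact (pow_lt_pow_left₀ hc zero_le hp).trans_le hdb
  tfae_have 5 → 3 := fun h => completion_perfect p fun a b hb => h a _ ⟨b, hb, rfl⟩
  tfae_have 5 → 4 := by
    rintro h x ⟨n, a, ha⟩ _ ⟨b, hb, rfl⟩
    have hN : p ^ n ≠ 0 := pow_ne_zero _ hp
    obtain ⟨c, hc⟩ := dense_pow_pow val.v p (fun a b hb => h a _ ⟨b, hb, rfl⟩) n a (b ^ p ^ n)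
      (pow_ne_zero _ hb)
    refine ⟨c, lt_of_pow_lt_pow_left₀ (p ^ n) zero_le ?_⟩
    rw [← map_pow, sub_pow_char_pow, ← ha, ← map_pow w, ← map_pow, ← map_pow, ← map_sub]
    exact hw.lt_iff_lt.mpr hc
  tfae_have 4 → 5 := by
    rintro h a _ ⟨b, hb, rfl⟩
    obtain ⟨x, hx⟩ := IsAlgClosed.exists_pow_nat_eq (algebraMap K Ω a) (Nat.pos_of_ne_zero hp)
    obtain ⟨d, hd, hdb⟩ := exists_pow_le (w.comap (algebraMap K Ω)) hp hb
    obtain ⟨c, hc⟩ := h x ⟨1, a, by rw [pow_one, hx]⟩ _ ⟨d, hd, rfl⟩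
    refine ⟨c, hw.lt_iff_lt.mp ?_⟩
    have h1 : algebraMap K Ω (a - c ^ p) = (x - algebraMap K Ω c) ^ p := by
      rw [sub_pow_char, hx, map_sub, map_pow]
    rw [Valuation.comap_apply, h1, map_pow]
    exact (pow_lt_pow_left₀ hc zero_le hp).trans_le hdb
  tfae_finish
end

section
/- Let (K(a)|K,v) be an extension of valued fields of degree p = char(Kv) > 0 such that the extension of v from K to K(a) is unique. If v(a−K) has no maximal element, then (K(a)|K,v) is immediate; equivalently, it has defect p. -/
/-!
Write `K₀`, `F₀` for the valuation rings of `K` and `F`. Uniqueness of the extension makes `F₀`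
integral over `K₀` (`isIntegral_of_uniqueExtension`): an `x ∈ F₀` that is not integral would be
excluded from some valuation ring of `F` lying over `K₀`. Two consequences carry the proof.

* `v (N x) = v x ^ p` for the norm `N` of `F|K` (`val_norm_eq_pow`), so `vF/vK` is killed by `p`.
* For `x ∈ F₀`, the reduction of the minimal polynomial of `x` is a power of an irreducible
  polynomial, because `K₀[x]` is local; hence the degree of the residue of `x` over `Kv` divides `p`
  (`natDegree_minpoly_residue_dvd`).

If the extension were not immediate, there would be an `x` whose value lies outside `vK`, so that
`v x` has order exactly `p` modulo `vK`, or an `x ∈ F₀` whose residue has degree exactly `p` over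
`Kv`. In both cases no cancellation occurs in sums `∑ i < p, cᵢ xⁱ` with `cᵢ ∈ K`, i.e. each term is
bounded by the sum (`val_term_le_of_val_notMem`, `val_term_le_of_residue`). Then the powers `xⁱ`,
`i < p`, form a basis of `F|K`, and for `a = ∑ cᵢ xⁱ` the constant `c₀` is a best approximation of
`a` in `K` (`exists_best_approx_of_powers`), contradicting the hypothesis on `v (a - K)`. The argument
works for every prime degree `p`.
-/

namespace Statement8

/-- `(F|K,v)` is an *immediate* extension of valued fields: the canonical embeddings
`vK → vF` and `Kv → Fv` are surjective (multiplicative notation). -/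
def IsImmediateExtension (K F : Type*) [Field K] [Field F] [Algebra K F]
    {Γ : Type*} [LinearOrderedCommGroupWithZero Γ] (v : Valuation F Γ) : Prop :=
  (∀ x : F, ∃ c : K, v (algebraMap K F c) = v x) ∧
  (∀ x : F, v x ≤ 1 → ∃ c : K, v (x - algebraMap K F c) < 1)

/-- The extension of the valuation `v` from `K` to `F` is unique: there is exactly one
valuation ring of `F` lying over the valuation ring of the restriction of `v` to `K`,
namely that of `v`.  (Valuation subrings of `F` whose preimage in `K` is the valuation
ring of `v|K` correspond exactly to the extensions of `v|K` to `F`, up to equivalence.) -/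
def UniqueExtension (K F : Type*) [Field K] [Field F] [Algebra K F]
    {Γ : Type*} [LinearOrderedCommGroupWithZero Γ] (v : Valuation F Γ) : Prop :=
  ∀ R : ValuationSubring F,
    R.toSubring.comap (algebraMap K F) = (v.comap (algebraMap K F)).integer →
    R = v.valuationSubring

open IsLocalRing Polynomial

/-! ### Reduction of minimal polynomials -/

/-- In an integral extension of local domains `B|A` with `A` integrally closed, the minimal polynomial
of `x` over `A` reduces to a power of the minimal polynomial `h` of the residue of `x`: the part `q` of
the reduction that is prime to `h` lifts to some `Q` with `Q(x)` a unit of `A[x]`, which makes `q` a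
unit. -/
theorem natDegree_minpoly_residue_dvd {A B : Type*} [CommRing A] [IsDomain A] [IsLocalRing A]
    [IsIntegrallyClosed A] [CommRing B] [IsDomain B] [IsLocalRing B] [Algebra A B]
    [IsLocalHom (algebraMap A B)] [Algebra.IsIntegral A B] [FaithfulSMul A B] (x : B) :
    (minpoly (ResidueField A) (residue B x)).natDegree ∣ (minpoly A x).natDegree := by
  have hx : IsIntegral A x := Algebra.IsIntegral.isIntegral x
  have hred : ∀ P : A[X], aeval (residue B x) (P.map (residue A)) = residue B (aeval x P) := by
    intro P
    rw [aeval_def, eval₂_map, aeval_def, hom_eval₂]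
    rfl
  set g := minpoly A x with hg
  have hgm : g.Monic := minpoly.monic hx
  have hgb : (g.map (residue A)).Monic := hgm.map _
  have hxb : IsIntegral (ResidueField A) (residue B x) :=
    ⟨g.map (residue A), hgb, by rw [← aeval_def, hred, minpoly.aeval, map_zero]⟩
  set h := minpoly (ResidueField A) (residue B x) with hh
  have hirr : Irreducible h := minpoly.irreducible hxb
  obtain ⟨q, hq, hndvd⟩ := (FiniteMultiplicity.of_not_isUnit hirr.not_isUnit
    hgb.ne_zero).exists_eq_pow_mul_and_not_dvd
  obtain ⟨Q, rfl⟩ := Polynomial.map_surjective _ residue_surjective q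
  have hQ0 : residue B (aeval x Q) ≠ 0 := fun h0 =>
    hndvd (minpoly.dvd _ _ ((hred Q).trans h0))
  have hQu : IsUnit (aeval x Q) := (residue_ne_zero_iff_isUnit _).mp hQ0
  -- `B` is integral over `A[x]`, so the inverse of `Q(x)` lies in `A[x]`.
  have hu : IsUnit (aeval (⟨x, Algebra.self_mem_adjoin_singleton A x⟩ : Algebra.adjoin A {x}) Q) := by
    have : Algebra.IsIntegral (Algebra.adjoin A {x}) B := Algebra.IsIntegral.tower_top A
    refine IsUnit.of_map (algebraMap (Algebra.adjoin A {x}) B) _ ?_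
    rw [← aeval_algebraMap_apply]
    exact hQu
  obtain ⟨⟨w, hw⟩, hw1⟩ := hu.exists_right_inv
  obtain ⟨P, rfl⟩ := (Algebra.adjoin_mem_exists_aeval A x hw)
  have hw2 : aeval x (Q * P - 1) = 0 := by
    have := congrArg (algebraMap (Algebra.adjoin A {x}) B) hw1
    rw [map_mul, ← aeval_algebraMap_apply, map_one] at this
    rw [map_sub, map_mul, map_one, sub_eq_zero]
    exact this
  have hdvd := Polynomial.map_dvd (residue A) (minpoly.isIntegrallyClosed_dvd hx hw2)
  rw [Polynomial.map_sub, Polynomial.map_mul, Polynomial.map_one] at hdvd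
  have hqg : Q.map (residue A) ∣ g.map (residue A) := ⟨_, hq.trans (mul_comm _ _)⟩
  have hunit : IsUnit (Q.map (residue A)) := by
    rw [isUnit_iff_dvd_one]
    simpa using (dvd_mul_right (Q.map (residue A)) (P.map (residue A))).sub (hqg.trans hdvd)
  refine ⟨multiplicity h (g.map (residue A)), ?_⟩
  nth_rw 1 [← hgm.natDegree_map (residue A), hq,
    natDegree_mul (pow_ne_zero _ hirr.ne_zero) hunit.ne_zero,
    natDegree_pow, natDegree_eq_zero_of_isUnit hunit, add_zero, mul_comm]

/-! ### Integrality and norms -/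

section

variable {K F : Type*} [Field K] [Field F] [Algebra K F]
    {Γ : Type*} [LinearOrderedCommGroupWithZero Γ] (v : Valuation F Γ)

instance : (v.comap (algebraMap K F)).HasExtension v := ⟨Valuation.IsEquiv.refl⟩

local notation "K₀" => Valuation.valuationSubring (Valuation.comap (algebraMap K F) v)
local notation "F₀" => Valuation.valuationSubring v

/-- If `x` is not integral over `K₀`, then `x⁻¹` and the maximal ideal of `K₀` generate a proper ideal
of `K₀[x⁻¹]`; a valuation ring of `F` dominating this ideal lies over `K₀` and omits `x`, so it differs
from `F₀`. -/
theorem isIntegral_of_uniqueExtension (huniq : UniqueExtension K F v) {x : F} (hx : v x ≤ 1) :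
    IsIntegral K₀ x := by
  rcases eq_or_ne x 0 with rfl | hx0
  · exact isIntegral_zero
  by_contra hni
  let := invertibleOfNonzero hx0
  let B := Algebra.adjoin K₀ {⅟x}
  let y : B := ⟨⅟x, Algebra.self_mem_adjoin_singleton _ _⟩
  have hne : (maximalIdeal K₀).map (algebraMap K₀ B) ⊔ .span {y} ≠ ⊤ := fun eq ↦ by
    obtain ⟨P, hP, hPx⟩ := Algebra.exists_aeval_invOf_eq_zero_of_idealMap_adjoin_sup_span_eq_top (⅟x) _
      (maximalIdeal.isMaximal K₀).ne_top eq
    have H : IsUnit P.leadingCoeff := of_not_not fun h ↦ by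
      simpa using sub_mem ((mem_maximalIdeal _).mpr h) hP
    refine hni ⟨.C H.unit⁻¹.1 * P, by simp [Polynomial.Monic], ?_⟩
    rw [← aeval_def, map_mul]
    simp only [invOf_invOf] at hPx
    rw [hPx, mul_zero]
  obtain ⟨R, hBR, hR⟩ := Ideal.image_subset_nonunits_valuationSubring (A := B.toSubring) _ hne
  have hKR : ∀ c : K, v (algebraMap K F c) ≤ 1 → algebraMap K F c ∈ R := fun c hc =>
    hBR (B.algebraMap_mem ⟨c, hc⟩)
  have hmax : ∀ c : K, v (algebraMap K F c) < 1 → algebraMap K F c ∈ R.nonunits := fun c hc =>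
    hR ⟨algebraMap K₀ B ⟨c, hc.le⟩, le_sup_left (α := Ideal B) (Ideal.mem_map_of_mem _
      ((Valuation.mem_maximalIdeal_iff _ _).mpr hc)), rfl⟩
  have hxR : x⁻¹ ∈ R.nonunits := by
    have : (⅟x : F) ∈ R.nonunits :=
      hR ⟨y, le_sup_right (α := Ideal B) (Ideal.subset_span rfl), rfl⟩
    rwa [invOf_eq_inv] at this
  have hcomap : R.toSubring.comap (algebraMap K F) = (v.comap (algebraMap K F)).integer := by
    ext c
    simp only [Subring.mem_comap, ValuationSubring.mem_toSubring, Valuation.mem_integer_iff,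
      Valuation.comap_apply]
    refine ⟨fun hc => ?_, hKR c⟩
    by_contra! hlt
    have h0 : algebraMap K F c ≠ 0 := by rintro h; simp [h] at hlt
    have h1 := hmax c⁻¹ (by rw [map_inv₀, map_inv₀]; exact inv_lt_one_of_one_lt₀ hlt)
    rw [map_inv₀, R.inv_mem_nonunits_iff] at h1
    exact h1.elim h0 fun h => h hc
  have hRv := huniq R hcomap
  rw [R.inv_mem_nonunits_iff] at hxR
  refine hxR.elim hx0 fun h => h ?_
  rw [hRv]
  exact hx

/-- The norm is, up to sign, a power of the constant coefficient of the minimal polynomial, and that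
coefficient is a multiple of `y` in `F₀`. -/
theorem val_norm_lt_one [FiniteDimensional K F] (huniq : UniqueExtension K F v) {y : F}
    (hy : v y < 1) : v (algebraMap K F (Algebra.norm K y)) < 1 := by
  have hint : IsIntegral K₀ y := isIntegral_of_uniqueExtension v huniq hy.le
  have hintK : IsIntegral K y := Algebra.IsIntegral.isIntegral y
  have hc0 : v (algebraMap K F ((minpoly K y).coeff 0)) < 1 := by
    rw [minpoly.isIntegrallyClosed_eq_field_fractions' K hint, coeff_map]
    have h0 := minpoly.aeval K₀ y
    rw [← divX_mul_X_add (minpoly K₀ y), map_add, map_mul, aeval_X, aeval_C] at h0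
    have h1 : v (aeval y (minpoly K₀ y).divX) ≤ 1 := by
      have : aeval y (minpoly K₀ y).divX = algebraMap F₀ F (aeval ⟨y, hy.le⟩ (minpoly K₀ y).divX) := by
        rw [← aeval_algebraMap_apply]; rfl
      rw [this]
      exact (aeval (⟨y, hy.le⟩ : F₀) (minpoly K₀ y).divX).2
    rw [← IsScalarTower.algebraMap_apply K₀ K F, ← neg_eq_of_add_eq_zero_right h0, Valuation.map_neg, map_mul]
    exact mul_lt_one_of_nonneg_of_lt_one_right h1 zero_le hy
  rw [Algebra.norm_eq_norm_adjoin, ← IntermediateField.adjoin.powerBasis_gen hintK,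
    Algebra.PowerBasis.norm_gen_eq_coeff_zero_minpoly, IntermediateField.adjoin.powerBasis_gen,
    IntermediateField.minpoly_gen]
  simp only [map_pow, map_mul, map_neg, map_one, Valuation.map_neg, one_pow, one_mul]
  exact pow_lt_one₀ zero_le hc0 Module.finrank_pos.ne'

/-- The element `y = x ^ n / N x`, with `n = [F : K]`, has norm `1`, so by `val_norm_lt_one` applied to
`y` and `y⁻¹` its value is `1`. -/
theorem val_norm_eq_pow [FiniteDimensional K F] (huniq : UniqueExtension K F v) {x : F} (hx : x ≠ 0) :
    v (algebraMap K F (Algebra.norm K x)) = v x ^ Module.finrank K F := by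
  have hNx : Algebra.norm K x ≠ 0 := Algebra.norm_ne_zero_iff.mpr hx
  set y : F := x ^ Module.finrank K F / algebraMap K F (Algebra.norm K x) with hy
  have hNy : Algebra.norm K y = 1 := by
    have h1 : y * algebraMap K F (Algebra.norm K x) = x ^ Module.finrank K F :=
      div_mul_cancel₀ _ (by simpa using hx)
    have h2 := congrArg (Algebra.norm K) h1
    rw [map_mul, map_pow, Algebra.norm_algebraMap] at h2
    exact (mul_eq_right₀ (pow_ne_zero _ hNx)).mp h2
  have hvy : v y = 1 := by
    rcases lt_trichotomy (v y) 1 with h | h | h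
    · simpa [hNy] using val_norm_lt_one v huniq h
    · exact h
    · have := val_norm_lt_one v huniq (y := y⁻¹) (by rw [map_inv₀]; exact inv_lt_one_of_one_lt₀ h)
      rw [Algebra.norm_inv, hNy] at this
      simp at this
  rw [hy, map_div₀, map_pow, div_eq_one_iff_eq (by simpa using hx)] at hvy
  exact hvy.symm

/-! ### Valuation-independent powers -/

/-- If the first `p = [F : K]` powers of `x` are valuation independent over `K`, then they form a basis
and every `a : F` has a best approximation in `K`, namely its coefficient at `x ^ 0`. -/
theorem exists_best_approx_of_powers {p : ℕ} (hp : 0 < p) (hdeg : Module.finrank K F = p) (a : F)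
    {x : F} (hx : x ≠ 0)
    (hind : ∀ c : Fin p → K, ∀ i, v (algebraMap K F (c i) * x ^ (i : ℕ)) ≤
      v (∑ j, algebraMap K F (c j) * x ^ (j : ℕ))) :
    ∃ c : K, ∀ c' : K, v (a - algebraMap K F c) ≤ v (a - algebraMap K F c') := by
  have : NeZero p := ⟨hp.ne'⟩
  have hli : LinearIndependent K (fun i : Fin p => x ^ (i : ℕ)) := by
    rw [Fintype.linearIndependent_iff]
    intro c hc i
    have := hind c i
    simp only [Algebra.smul_def] at hc
    rw [hc, map_zero, le_zero_iff, map_eq_zero] at this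
    simpa [hx] using this
  have hspan := hli.span_eq_top_of_card_eq_finrank (by simp [hdeg])
  obtain ⟨c, hc⟩ := (Submodule.mem_span_range_iff_exists_fun K).mp (hspan ▸ Submodule.mem_top (x := a))
  simp only [Algebra.smul_def] at hc
  -- Subtracting `c'` from `a` changes only the coefficient at `x ^ 0`.
  have hsub : ∀ c' : K, a - algebraMap K F c' =
      ∑ j, algebraMap K F ((Function.update c 0 (c 0 - c')) j) * x ^ (j : ℕ) := by
    intro c'
    rw [← hc, Finset.sum_eq_add_sum_sdiff_singleton_of_mem (Finset.mem_univ (0 : Fin p)),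
      Finset.sum_eq_add_sum_sdiff_singleton_of_mem (Finset.mem_univ (0 : Fin p))
      (fun j : Fin p => algebraMap K F ((Function.update c 0 (c 0 - c')) j) * x ^ (j : ℕ))]
    have : ∀ j ∈ (Finset.univ \ {0} : Finset (Fin p)), algebraMap K F (c j) * x ^ (j : ℕ) =
        algebraMap K F ((Function.update c 0 (c 0 - c')) j) * x ^ (j : ℕ) := by
      intro j hj
      rw [Function.update_of_ne (by simpa using hj)]
    rw [Finset.sum_congr rfl this]
    simp
    ring
  refine ⟨c 0, fun c' => ?_⟩
  rw [hsub (c 0)]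
  refine v.map_sum_le fun j _ => ?_
  rcases eq_or_ne j 0 with rfl | hj
  · simp
  · have := hind (Function.update c 0 (c 0 - c')) j
    rw [← hsub c'] at this
    rwa [Function.update_of_ne hj] at this ⊢

/-- If `v x ∉ vK`, then `v x` has order `p` modulo `vK`, so the nonzero terms of a sum `∑ cⱼ xʲ` over
`j < p` have pairwise distinct values. -/
theorem val_term_le_of_val_notMem [FiniteDimensional K F] (huniq : UniqueExtension K F v) {p : ℕ}
    (hp : p.Prime) (hdeg : Module.finrank K F = p) {x : F} (hx : x ≠ 0)
    (hval : ∀ c : K, v (algebraMap K F c) ≠ v x) (c : Fin p → K) (i : Fin p) :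
    v (algebraMap K F (c i) * x ^ (i : ℕ)) ≤
      v (∑ j, algebraMap K F (c j) * x ^ (j : ℕ)) := by
  have : NeZero p := ⟨hp.ne_zero⟩
  -- `v x ^ p ∈ vK` by `val_norm_eq_pow`, so by Bézout `v x ^ d ∈ vK` with `d` prime to `p` would give
  -- `v x ∈ vK`.
  have hpow : ∀ d : ℕ, d.Coprime p → ∀ b : K, v (algebraMap K F b) ≠ v x ^ d := by
    intro d hd b hb
    have hvx : v x ≠ 0 := by simpa using hx
    have hN := val_norm_eq_pow v huniq hx
    rw [hdeg] at hN
    have hbez : (1 : ℤ) = d * Nat.gcdA d p + p * Nat.gcdB d p := by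
      rw [← Nat.gcd_eq_gcd_ab, hd.gcd_eq_one]; rfl
    refine hval (b ^ Nat.gcdA d p * Algebra.norm K x ^ Nat.gcdB d p) ?_
    rw [map_mul, map_zpow₀, map_zpow₀, map_mul, map_zpow₀, map_zpow₀, hb, hN, ← zpow_natCast,
      ← zpow_natCast, ← zpow_mul, ← zpow_mul, ← zpow_add₀ hvx, ← hbez, zpow_one]
  have hdist : ∀ j k : Fin p, j < k → c j ≠ 0 → c k ≠ 0 →
      v (algebraMap K F (c j) * x ^ (j : ℕ)) ≠ v (algebraMap K F (c k) * x ^ (k : ℕ)) := by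
    intro j k hjk hj hk heq
    have hjk' : (j : ℕ) < k := hjk
    refine hpow (k - j) ?_ (c j / c k) ?_
    · refine Nat.Coprime.symm ((Nat.Prime.coprime_iff_not_dvd hp).mpr fun hdvd => ?_)
      have := Nat.le_of_dvd (by omega) hdvd
      omega
    · rw [map_div₀, map_div₀, div_eq_iff (by simpa using hk), ← map_pow, ← map_mul]
      have : (k : ℕ) = (k - j) + j := by omega
      rw [this, pow_add, ← mul_assoc, map_mul v, map_mul v] at heq
      have := mul_right_cancel₀ (by simpa using fun h => absurd h hx) heq
      rw [this, mul_comm]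
  obtain ⟨m, -, hm⟩ := Finset.exists_max_image Finset.univ
    (fun j : Fin p => v (algebraMap K F (c j) * x ^ (j : ℕ))) ⟨i, Finset.mem_univ i⟩
  refine (hm i (Finset.mem_univ i)).trans (le_of_eq ?_)
  rw [Finset.sum_eq_add_sum_sdiff_singleton_of_mem (Finset.mem_univ m)]
  rcases eq_or_ne (c m) 0 with h0 | h0
  · have hz : ∀ j, algebraMap K F (c j) * x ^ (j : ℕ) = 0 := by
      intro j
      have := hm j (Finset.mem_univ j)
      rwa [h0, map_zero, zero_mul, map_zero, le_zero_iff, map_eq_zero] at this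
    simp [hz]
  · refine (v.map_add_eq_of_lt_left (v.map_sum_lt (by simp [h0, hx]) fun j hj => ?_)).symm
    refine lt_of_le_of_ne (hm j (Finset.mem_univ j)) ?_
    have hjm : j ≠ m := by simpa using hj
    rcases eq_or_ne (c j) 0 with hj0 | hj0
    · rw [hj0, map_zero, zero_mul, map_zero]
      exact (by simp [h0, hx] : v _ ≠ 0).symm
    · rcases lt_or_gt_of_ne hjm with h | h
      · exact hdist j m h hj0 h0
      · exact (hdist m j h h0 hj0).symm

/-- If the residue of `x` has degree at least `p`, dividing `∑ cⱼ xʲ` by a coefficient `cₘ` of maximal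
value gives a polynomial in `x` over `K₀` whose reduction is nonzero of degree `< p`, hence a unit
of `F₀`. -/
theorem val_term_le_of_residue {p : ℕ} (x : F₀)
    (hdeg : p ≤ (minpoly (ResidueField K₀) (residue F₀ x)).natDegree)
    (c : Fin p → K) (i : Fin p) :
    v (algebraMap K F (c i) * (x : F) ^ (i : ℕ)) ≤
      v (∑ j, algebraMap K F (c j) * (x : F) ^ (j : ℕ)) := by
  obtain ⟨m, -, hm⟩ := Finset.exists_max_image Finset.univ
    (fun j : Fin p => v (algebraMap K F (c j))) ⟨i, Finset.mem_univ i⟩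
  have hle : v (algebraMap K F (c i) * (x : F) ^ (i : ℕ)) ≤ v (algebraMap K F (c m)) := by
    rw [map_mul, map_pow]
    exact (mul_le_of_le_one_right' (pow_le_one' x.2 _)).trans (hm i (Finset.mem_univ i))
  refine hle.trans ?_
  rcases eq_or_ne (c m) 0 with h0 | h0
  · simp [h0]
  have hvm : v (algebraMap K F (c m)) ≠ 0 := by simpa using h0
  have hd : ∀ j, v (algebraMap K F (c j / c m)) ≤ 1 := fun j => by
    rw [map_div₀, map_div₀]
    exact div_le_one_of_le₀ (hm j (Finset.mem_univ j)) zero_le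
  let d : Fin p → K₀ := fun j => ⟨c j / c m, hd j⟩
  let P : K₀[X] := ∑ j, C (d j) * X ^ (j : ℕ)
  have hPd : P.degree < p := by
    refine (degree_sum_le _ _).trans_lt ((Finset.sup_lt_iff (WithBot.bot_lt_coe p)).mpr fun j _ => ?_)
    exact (degree_C_mul_X_pow_le _ _).trans_lt (WithBot.coe_lt_coe.mpr j.2)
  have hPm : P.coeff m = 1 := by
    simp only [P, finsetSum_coeff, coeff_C_mul_X_pow]
    rw [Finset.sum_eq_single m]
    · simp [d, h0]; rfl
    · intro j _ hj
      rw [if_neg]; exact fun h => hj (Fin.ext h.symm)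
    · simp
  have hred : aeval (residue F₀ x) (P.map (residue K₀)) = residue F₀ (aeval x P) := by
    rw [aeval_def, eval₂_map, aeval_def, hom_eval₂]
    rfl
  have hne : residue F₀ (aeval x P) ≠ 0 := by
    intro h
    rw [← hred] at h
    have hP0 : P.map (residue K₀) ≠ 0 := fun h => by
      have := congrArg (fun q => coeff q m) h
      simp [hPm] at this
    have h1 := natDegree_le_natDegree (minpoly.degree_le_of_ne_zero _ _ hP0 h)
    have h2 : (P.map (residue K₀)).natDegree < p :=
      (natDegree_lt_iff_degree_lt hP0).mpr (degree_map_le.trans_lt hPd)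
    omega
  have hv1 : v ((aeval x P : F₀) : F) = 1 := by
    refine le_antisymm (aeval x P).2 (not_lt.mp fun hlt => hne ?_)
    rw [residue_eq_zero_iff]
    exact (Valuation.mem_maximalIdeal_iff _ _).mpr hlt
  have hsum : ∑ j, algebraMap K F (c j) * (x : F) ^ (j : ℕ) =
      algebraMap K F (c m) * ((aeval x P : F₀) : F) := by
    have : ((aeval x P : F₀) : F) = ∑ j, algebraMap K F (c j / c m) * (x : F) ^ (j : ℕ) := by
      have h1 : ((aeval x P : F₀) : F) = aeval (x : F) P := by
        rw [← ValuationSubring.algebraMap_apply, ← aeval_algebraMap_apply]; rfl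
      rw [h1]
      simp only [P, map_sum, map_mul, map_pow, aeval_C, aeval_X]
      rfl
    rw [this, Finset.mul_sum]
    refine Finset.sum_congr rfl fun j _ => ?_
    rw [← mul_assoc, ← map_mul, mul_div_cancel₀ _ h0]
  rw [hsum, map_mul, hv1, mul_one]

end

/-! ### Immediateness -/

/-- Let `(K(a)|K,v)` be an extension of valued fields of degree
`p = char(Kv) > 0` such that the extension of `v` from `K` to `K(a)` is unique.
If `v(a−K)` has no maximal element, then `(K(a)|K,v)` is immediate (equivalently, by the
Lemma of Ostrowski, it has defect `p`).

Here `F = K(a)`; the condition `p = char(Kv) > 0` is rendered as: `p` is prime and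
`v p < 1` (the residue of `p` is zero).  Multiplicative notation: "no maximal element" of
the additive set `v(a−K)` reads: for each `c` there is `c'` with `v(a−c') < v(a−c)`. -/
theorem statement8 {K F : Type*} [Field K] [Field F] [Algebra K F]
    {Γ : Type*} [LinearOrderedCommGroupWithZero Γ] (v : Valuation F Γ)
    (p : ℕ) (hp : p.Prime) (hres : v ((p : ℕ) : F) < 1)
    (a : F) (hgen : IntermediateField.adjoin K {a} = ⊤)
    (hdeg : Module.finrank K F = p)
    (huniq : UniqueExtension K F v)
    (hnomax : ∀ c : K, ∃ c' : K, v (a - algebraMap K F c') < v (a - algebraMap K F c)) :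
    IsImmediateExtension K F v := by
  have hfd : FiniteDimensional K F := Module.finite_of_finrank_pos (hdeg ▸ hp.pos)
  have hnot : ¬ ∃ c : K, ∀ c' : K, v (a - algebraMap K F c) ≤ v (a - algebraMap K F c') := by
    rintro ⟨c, hc⟩
    obtain ⟨c', hc'⟩ := hnomax c
    exact (hc c').not_gt hc'
  refine ⟨fun x => ?_, fun x hx => ?_⟩
  · rcases eq_or_ne x 0 with rfl | hx0
    · exact ⟨0, by simp⟩
    by_contra! hval
    exact hnot (exists_best_approx_of_powers v hp.pos hdeg a hx0
      (val_term_le_of_val_notMem v huniq hp hdeg hx0 hval))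
  · let x' : v.valuationSubring := ⟨x, hx⟩
    set k₀ := (v.comap (algebraMap K F)).valuationSubring
    have hint : Algebra.IsIntegral k₀ v.valuationSubring := ⟨fun z => by
      have := isIntegral_of_uniqueExtension v huniq z.2
      exact (isIntegral_algebraMap_iff (B := F) Subtype.val_injective).mp this⟩
    have hf : FaithfulSMul k₀ v.valuationSubring := by
      rw [faithfulSMul_iff_algebraMap_injective]
      intro r s hrs
      exact Subtype.ext ((algebraMap K F).injective (congrArg Subtype.val hrs))
    have hdvd := natDegree_minpoly_residue_dvd (A := k₀) x'
    have hdeg' : (minpoly k₀ x').natDegree ∣ p := by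
      have h1 : IsIntegral k₀ x := isIntegral_of_uniqueExtension v huniq hx
      have h2 : minpoly k₀ x' = minpoly k₀ x :=
        (minpoly.algebraMap_eq (B := v.valuationSubring) (B' := F) Subtype.val_injective x').symm
      have h3 := minpoly.degree_dvd (K := K) (L := F) (x := x) (Algebra.IsIntegral.isIntegral x)
      rwa [minpoly.isIntegrallyClosed_eq_field_fractions' K h1, (minpoly.monic h1).natDegree_map,
        hdeg, ← h2] at h3
    rcases (Nat.dvd_prime hp).mp (hdvd.trans hdeg') with h | h
    · obtain ⟨r, hr⟩ := minpoly.natDegree_eq_one_iff.mp h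
      obtain ⟨c, rfl⟩ := residue_surjective r
      refine ⟨c, ?_⟩
      have : residue v.valuationSubring (x' - algebraMap k₀ _ c) = 0 := by
        rw [map_sub, sub_eq_zero, ← hr]
        rfl
      rw [residue_eq_zero_iff] at this
      exact (Valuation.mem_maximalIdeal_iff _ _).mp this
    · have hx0 : x ≠ 0 := by
        rintro rfl
        have : residue v.valuationSubring x' = 0 := map_zero _
        rw [this, minpoly.zero, natDegree_X] at h
        exact hp.one_lt.ne h
      exact absurd (exists_best_approx_of_powers v hp.pos hdeg a hx0
        (val_term_le_of_residue v x' h.ge)) hnot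

end Statement8
end

section
/- Let (K(a)|K,v) be a normal extension of valued fields of prime degree p, and let K^h be a henselization of (K,v). If a ∉ K^h, then the extension of the valuation v from K to K(a) is unique. -/
/-!
Write `L = K(a)`, let `A` be the valuation ring of `v` on `K`, and let `O` be that of `v` on `L`.
Since `[L : K]` is prime, the normal extension `L|K` is either purely inseparable or Galois.

In the purely inseparable case every `x ∈ L` has a power in `K`, and a valuation ring contains `x`
as soon as it contains a positive power of `x` (`eq_of_isPurelyInseparable`).

In the Galois case, suppose that there is a second extension `R ≠ O`. Valuation rings over `A` are
determined by their centres on the integral closure `B` of `A` in `L` (`le_of_nonunits`), and the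
Galois group permutes the primes of `B` over the maximal ideal of `A` transitively. Having prime
order, it therefore acts freely on the conjugates of the centre `P` of `O`. The Chinese remainder
theorem yields `b ∈ B` congruent to `1` modulo `P` whose other conjugates all lie in `P`, so the
characteristic polynomial of `b` over `A` is congruent to `(X - 1) X^(p - 1)` and has the simple
root `1` in the residue field (`exists_hensel_polynomial`). By Hensel's lemma it has a root in
`K^h`; this root is a conjugate of `b`, so it generates `L`, whence `L ⊆ K^h` and in particular
`a ∈ K^h` (`mem_of_henselian`).
-/

namespace Statement9

/-- The extension of the valuation `v` from `K` to `F` is unique: there is exactly one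
valuation ring of `F` lying over the valuation ring of the restriction of `v` to `K`,
namely that of `v`.  (Valuation subrings of `F` whose preimage in `K` is the valuation
ring of `v|K` correspond exactly to the extensions of `v|K` to `F`, up to equivalence.) -/
def UniqueExtension (K F : Type*) [Field K] [Field F] [Algebra K F]
    {Γ : Type*} [LinearOrderedCommGroupWithZero Γ] (v : Valuation F Γ) : Prop :=
  ∀ R : ValuationSubring F,
    R.toSubring.comap (algebraMap K F) = (v.comap (algebraMap K F)).integer →
    R = v.valuationSubring

section

open Polynomial

variable {K L : Type*} [Field K] [Field L] [Algebra K L]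

/-! ### Integral elements and tails of an algebraic equation -/

lemma isIntegral_of_forall_valuationSubring (A : ValuationSubring K) {x : L}
    (h : ∀ V : ValuationSubring L, (∀ a : A, algebraMap K L a ∈ V) → x ∈ V) :
    IsIntegral A x := by
  by_contra hx
  have : IsIntegrallyClosedIn (integralClosure A L).toSubring L :=
    inferInstanceAs (IsIntegrallyClosedIn (integralClosure A L) L)
  obtain ⟨V, hV, hxV⟩ := Subring.exists_le_valuationSubring_of_isIntegrallyClosedIn
    (x := x) (R := (integralClosure A L).toSubring) hx
  exact hxV (h V fun a ↦ hV (isIntegral_algebraMap (R := A) (x := a)))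

lemma mem_of_isIntegral {A : ValuationSubring K} {V : ValuationSubring L}
    (hV : ∀ a : A, algebraMap K L a ∈ V) {b : L} (hb : IsIntegral A b) : b ∈ V := by
  obtain ⟨f, hf, hfb⟩ := hb
  let φ : A →+* V := ((algebraMap K L).comp (algebraMap A K)).codRestrict V hV
  have : IsIntegral V b := ⟨f.map φ, hf.map φ, by rw [eval₂_map]; exact hfb⟩
  obtain ⟨y, hy⟩ := IsIntegrallyClosed.isIntegral_iff.mp this
  rw [← hy]; exact y.2

/-- If `f = ∑ aᵢ Xⁱ`, the iterates of `divX` evaluate to the tails `bⱼ = ∑_{i ≥ j} aᵢ x^(i - j)`,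
which satisfy `bⱼ = bⱼ₊₁ x + aⱼ`. -/
lemma aeval_divX_iterate {A : ValuationSubring K} (f : A[X]) (x : L) (j : ℕ) :
    aeval x (divX^[j] f) = aeval x (divX^[j + 1] f) * x + algebraMap K L (f.coeff j) := by
  have hc : ∀ j, (divX^[j] f).coeff 0 = f.coeff j := by
    intro j
    suffices ∀ n, (divX^[j] f).coeff n = f.coeff (n + j) by simpa using this 0
    induction j with
    | zero => simp
    | succ j ih => intro n; rw [Function.iterate_succ_apply', coeff_divX, ih]; congr 1; ring
  conv_lhs => rw [← divX_mul_X_add (divX^[j] f)]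
  rw [Function.iterate_succ_apply', map_add, map_mul, aeval_X, aeval_C, hc]
  rfl

/-- The tails `bⱼ` of an equation `f(x) = 0` over `A`, and the products `bⱼ₊₁ x`, are integral
over `A`. Both are checked in each valuation ring `V` over `A`: if `x ∈ V` this is clear, and if
`x⁻¹ ∈ V` then `bⱼ₊₁ = (bⱼ - aⱼ) x⁻¹` allows an induction starting from `b₀ = f(x) = 0`. -/
lemma isIntegral_aeval_divX {A : ValuationSubring K} (f : A[X]) {x : L} (hx : aeval x f = 0)
    (j : ℕ) : IsIntegral A (aeval x (divX^[j] f)) ∧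
      IsIntegral A (aeval x (divX^[j + 1] f) * x) := by
  have key : ∀ j, IsIntegral A (aeval x (divX^[j] f)) := by
    intro j
    refine isIntegral_of_forall_valuationSubring A fun V hV ↦ ?_
    by_cases hxV : x ∈ V
    · rw [aeval_eq_sum_range]
      refine sum_mem fun i _ ↦ ?_
      rw [Algebra.smul_def]
      exact mul_mem (hV _) (pow_mem hxV i)
    have hx0 : x ≠ 0 := by rintro rfl; exact hxV (zero_mem _)
    have hxV' : x⁻¹ ∈ V := (V.mem_or_inv_mem x).resolve_left hxV
    induction j with
    | zero => simp [hx]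
    | succ j ih =>
      have := aeval_divX_iterate f x j
      have h2 : aeval x (divX^[j + 1] f) =
          (aeval x (divX^[j] f) - algebraMap K L (f.coeff j)) * x⁻¹ := by
        rw [this]; field_simp; ring
      rw [h2]
      exact mul_mem (sub_mem ih (hV _)) hxV'
  refine ⟨key j, ?_⟩
  have : aeval x (divX^[j + 1] f) * x = aeval x (divX^[j] f) - algebraMap A L (f.coeff j) := by
    rw [aeval_divX_iterate f x j]; exact (add_sub_cancel_right _ _).symm
  rw [this]
  exact (key j).sub isIntegral_algebraMap

/-- An algebraic equation over `K` can be divided by a coefficient of largest valuation. -/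
lemma exists_aeval_eq_zero_coeff_eq_one (A : ValuationSubring K) {x : L} (hx : IsAlgebraic K x) :
    ∃ f : A[X], aeval x f = 0 ∧ ∃ i, f.coeff i = 1 := by
  obtain ⟨q, hq, hqx⟩ := hx
  obtain ⟨i, hi, hmax⟩ := q.support.exists_max_image (fun k ↦ A.valuation (q.coeff k))
    (nonempty_support_iff.mpr hq)
  have hi0 : q.coeff i ≠ 0 := mem_support_iff.mp hi
  have hl : C (q.coeff i)⁻¹ * q ∈ lifts (algebraMap A K) := by
    rw [lifts_iff_coeff_lifts]
    intro k
    suffices h : A.valuation ((q.coeff i)⁻¹ * q.coeff k) ≤ 1 by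
      rw [coeff_C_mul]
      exact ⟨⟨_, (A.valuation_le_one_iff _).mp h⟩, rfl⟩
    by_cases hk : q.coeff k = 0
    · simp [hk]
    have := hmax k (mem_support_iff.mpr hk)
    rw [map_mul, map_inv₀, inv_mul_le_one₀ (by simpa [zero_lt_iff] using hi0)]
    exact this
  obtain ⟨f, hf⟩ := (mem_lifts _).mp hl
  refine ⟨f, ?_, i, ?_⟩
  · rw [← aeval_map_algebraMap K, hf, map_mul, hqx, mul_zero]
  · apply FaithfulSMul.algebraMap_injective A K
    rw [← coeff_map, hf, coeff_C_mul, inv_mul_cancel₀ hi0, map_one]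

/-! ### Centres of valuation rings on the integral closure -/

/-- A valuation ring over `A` is determined by its centre on the integral closure of `A`, and
bigger centres give smaller rings. For `x ∈ R`, either some tail `bⱼ₊₁` of an equation for `x` is a
unit of `R'`, so that `x = (bⱼ₊₁ x) / bⱼ₊₁ ∈ R'`, or all tails lie in the maximal ideal of `R`,
which then contains every coefficient `aⱼ = bⱼ - bⱼ₊₁ x`; but one of these is `1`. -/
lemma le_of_nonunits [Algebra.IsAlgebraic K L] {A : ValuationSubring K}
    {R R' : ValuationSubring L}
    (hR' : ∀ a : A, algebraMap K L a ∈ R')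
    (h : ∀ b : L, IsIntegral A b → b ∈ R'.nonunits → b ∈ R.nonunits) : R ≤ R' := by
  intro x hx
  obtain ⟨f, hf, i, hi⟩ := exists_aeval_eq_zero_coeff_eq_one A
    (Algebra.IsAlgebraic.isAlgebraic (R := K) x)
  by_contra hxR'
  have hmul : ∀ j, aeval x (divX^[j] f) ∈ R.nonunits := by
    intro j
    apply h _ (isIntegral_aeval_divX f hf j).1
    cases j with
    | zero => simp [hf, R'.nonunits.zero_mem]
    | succ j =>
      by_contra hb
      have h1 := mem_of_isIntegral hR' (isIntegral_aeval_divX f hf j).2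
      rw [ValuationSubring.mem_nonunits_iff_or, not_or, not_not] at hb
      apply hxR'
      have := mul_mem hb.2 h1
      rwa [inv_mul_cancel_left₀ hb.1] at this
  have h1 : (1 : L) ∈ R.nonunits := by
    have e := aeval_divX_iterate f x i
    rw [hi] at e
    have e' : (1 : L) = aeval x (divX^[i] f) - aeval x (divX^[i + 1] f) * x := by
      rw [e]; simp
    rw [e']
    refine sub_mem (hmul i) ?_
    have h3 := hmul (i + 1)
    rw [ValuationSubring.mem_nonunits_iff] at h3 ⊢
    rw [map_mul]
    exact mul_lt_one_of_lt_of_le h3 ((R.valuation_le_one_iff x).mpr hx)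
  simp [ValuationSubring.mem_nonunits_iff] at h1

/-- The centre of a valuation ring `R` over `A` on the integral closure of `A` in `L`: the prime
ideal of those integral elements that lie in the maximal ideal of `R`. -/
def centre (A : ValuationSubring K) (R : ValuationSubring L)
    (hR : ∀ a : A, algebraMap K L a ∈ R) : Ideal (integralClosure A L) :=
  (IsLocalRing.maximalIdeal R).comap
    ((algebraMap (integralClosure A L) L).codRestrict R fun b ↦ mem_of_isIntegral hR b.2)

instance (A : ValuationSubring K) (R : ValuationSubring L)
    (hR : ∀ a : A, algebraMap K L a ∈ R) : (centre A R hR).IsPrime := by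
  unfold centre; infer_instance

lemma mem_centre {A : ValuationSubring K} {R : ValuationSubring L}
    {hR : ∀ a : A, algebraMap K L a ∈ R} {b : integralClosure A L} :
    b ∈ centre A R hR ↔ (b : L) ∈ R.nonunits := by
  rw [centre, Ideal.mem_comap, ← ValuationSubring.coe_mem_nonunits_iff]
  rfl

lemma algebraMap_mem_nonunits_iff {A : ValuationSubring K} {R : ValuationSubring L}
    (hR : R.comap (algebraMap K L) = A) {a : K} :
    algebraMap K L a ∈ R.nonunits ↔ a ∈ A.nonunits := by
  subst hR
  simp [ValuationSubring.mem_nonunits_iff_or, ← map_inv₀, ValuationSubring.mem_comap]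

lemma centre_under {A : ValuationSubring K} {R : ValuationSubring L}
    (hRA : R.comap (algebraMap K L) = A) (hR : ∀ a : A, algebraMap K L a ∈ R) :
    (centre A R hR).under A = IsLocalRing.maximalIdeal A := by
  ext a
  rw [Ideal.mem_comap, mem_centre, ← ValuationSubring.coe_mem_nonunits_iff,
    ← algebraMap_mem_nonunits_iff hRA]
  rfl

/-! ### The Galois case -/

open scoped Pointwise in
/-- If a valuation ring `A` has two distinct extensions to a Galois extension of prime degree,
there are an element `b ∉ K` and its characteristic polynomial `f` over `A` such that `1` is a simple
root of `f` modulo the maximal ideal. Indeed the Galois group then moves the centre `P` of `O`, so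
it permutes the conjugates of `P` freely, and the Chinese remainder theorem gives `b ≡ 1` modulo
`P` all of whose other conjugates lie in `P`. -/
lemma exists_hensel_polynomial [FiniteDimensional K L] [IsGalois K L]
    (hp : (Module.finrank K L).Prime) {A : ValuationSubring K} {O R : ValuationSubring L}
    (hO : O.comap (algebraMap K L) = A) (hR : R.comap (algebraMap K L) = A) (hne : R ≠ O) :
    ∃ (b : L) (f : A[X]), f.Monic ∧
      f.map (algebraMap A L) = ∏ g : Gal(L/K), (X - C (g b)) ∧
      b ∉ Set.range (algebraMap K L) ∧
      f.eval 1 ∈ IsLocalRing.maximalIdeal A ∧ IsUnit (f.derivative.eval 1) := by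
  classical
  have hO' : ∀ a : A, algebraMap K L a ∈ O := fun a ↦ by
    rw [← ValuationSubring.mem_comap, hO]; exact a.2
  have hR' : ∀ a : A, algebraMap K L a ∈ R := fun a ↦ by
    rw [← ValuationSubring.mem_comap, hR]; exact a.2
  let B := integralClosure A L
  have : IsFractionRing B L := 
    integralClosure.isFractionRing_of_finite_extension K L
  let G := Gal(L/K)
  let : MulSemiringAction G B := IsIntegralClosure.MulSemiringAction A K L B
  have hinv : Algebra.IsInvariant A B G := Algebra.isInvariant_of_isGalois A K L B
  have hsmul : ∀ (g : G) (b : B), ((g • b : B) : L) = g (b : L) := fun g b ↦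
    algebraMap_galRestrict_apply A g b
  have hcomm : SMulCommClass G A B := ⟨fun g a b ↦ by
    apply Subtype.ext
    rw [hsmul, Subalgebra.coe_smul, Subalgebra.coe_smul, hsmul, Algebra.smul_def,
      Algebra.smul_def, map_mul]
    congr 1
    exact g.commutes a⟩
  set P := centre A O hO' with hP
  have hPmax : P.IsMaximal := Ideal.isMaximal_of_isIntegral_of_isMaximal_comap (R := A) P (by
    have := centre_under hO hO'
    rw [Ideal.under_def] at this
    rw [this]; infer_instance)
  -- If `P` were stable, `R` would have the same centre, the group being transitive on primes
  -- over the maximal ideal of `A`.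
  obtain ⟨g₀, hg₀⟩ : ∃ g : G, g • P ≠ P := by
    by_contra! hall
    obtain ⟨g, hg⟩ := Algebra.IsInvariant.exists_smul_of_under_eq A B G P (centre A R hR')
      (by rw [centre_under hO hO', centre_under hR hR'])
    rw [hall] at hg
    have hiff : ∀ b : L, IsIntegral A b → (b ∈ R.nonunits ↔ b ∈ O.nonunits) := fun b hb ↦ by
      rw [← mem_centre (b := ⟨b, hb⟩) (hR := hR'), hg, hP, mem_centre]
    exact hne (le_antisymm (le_of_nonunits hO' fun b hb ↦ (hiff b hb).2)
      (le_of_nonunits hR' fun b hb ↦ (hiff b hb).1))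
  have hcard : (Nat.card G).Prime := by rwa [IsGalois.card_aut_eq_finrank]
  have : Fact (Nat.card G).Prime := ⟨hcard⟩
  -- The stabilizer of `P` is a proper subgroup of a group of prime order.
  have hstab : ∀ g : G, g ≠ 1 → g • P ≠ P := by
    intro g hg h
    rcases (MulAction.stabilizer G P).eq_bot_or_eq_top_of_prime_card with h' | h'
    · exact hg ((Subgroup.mem_bot).mp (h' ▸ MulAction.mem_stabilizer_iff.mpr h))
    · exact hg₀ (MulAction.mem_stabilizer_iff.mp (h' ▸ Subgroup.mem_top g₀))
  have hmax : ∀ g : G, (g • P).IsMaximal := fun g ↦ by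
    rw [Ideal.pointwise_smul_eq_comap]
    exact Ideal.comap_isMaximal_of_surjective _ (MulSemiringAction.toRingEquiv G B g⁻¹).surjective
  have htop : P ⊔ ⨅ g ∈ (Finset.univ.erase (1 : G)), g • P = ⊤ := by
    apply Ideal.sup_iInf_eq_top
    intro g hg
    exact Ideal.IsMaximal.coprime_of_ne hPmax (hmax g) (hstab g (Finset.ne_of_mem_erase hg)).symm
  obtain ⟨u, hu, b, hb, hub⟩ := Submodule.mem_sup.mp (htop ▸ Submodule.mem_top (x := (1 : B)))
  have hb' : ∀ g : G, g ≠ 1 → g • b ∈ P := by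
    intro g hg
    simp only [Ideal.mem_iInf, Finset.mem_erase, Finset.mem_univ, and_true] at hb
    have := hb g⁻¹ (inv_ne_one.mpr hg)
    rwa [Ideal.mem_inv_pointwise_smul_iff] at this
  have h1P : (1 : B) ∉ P := fun h ↦ hPmax.ne_top ((Ideal.eq_top_iff_one P).mpr h)
  have hbP : b ∉ P := fun h ↦ h1P (hub ▸ add_mem hu h)
  obtain ⟨f, hf, -, hfm⟩ := Polynomial.lifts_and_natDegree_eq_and_monic
    (Algebra.IsInvariant.charpoly_mem_lifts A B G b) (MulSemiringAction.monic_charpoly G b)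
  have hunder : ∀ a : A, a ∈ IsLocalRing.maximalIdeal A ↔ algebraMap A B a ∈ P := fun a ↦ by
    rw [← centre_under hO hO', Ideal.mem_comap]
  have hev : ∀ q : A[X], algebraMap A B (q.eval 1) = (q.map (algebraMap A B)).eval 1 :=
    fun q ↦ (eval_one_map _ q).symm
  have hsplit : f.map (algebraMap A B) =
      (X - C b) * ∏ g ∈ Finset.univ.erase (1 : G), (X - C (g • b)) := by
    rw [hf, MulSemiringAction.charpoly_eq, ← Finset.mul_prod_erase _ _ (Finset.mem_univ (1 : G)),
      one_smul]
  have h1b : 1 - b ∈ P := by rw [← hub]; simpa using hu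
  refine ⟨b, f, hfm, ?_, ?_, ?_, ?_⟩
  · have : f.map (algebraMap A L) = (f.map (algebraMap A B)).map (algebraMap B L) := by
      rw [Polynomial.map_map]; rfl
    rw [this, hf, MulSemiringAction.charpoly_eq, Polynomial.map_prod]
    refine Finset.prod_congr rfl fun g _ ↦ ?_
    rw [Polynomial.map_sub, map_X, map_C]
    congr 2
    exact hsmul g b
  · rintro ⟨k, hk⟩
    have : g₀ • b = b := Subtype.ext (by rw [hsmul, ← hk, g₀.commutes])
    refine hbP (this ▸ hb' g₀ ?_)
    rintro rfl
    exact hg₀ (one_smul _ _)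
  · rw [hunder, hev, hsplit, eval_mul, eval_sub, eval_X, eval_C]
    exact P.mul_mem_right _ h1b
  · rw [← not_not (a := IsUnit _), ← mem_nonunits_iff, ← IsLocalRing.mem_maximalIdeal, hunder,
      hev, ← derivative_map, hsplit, derivative_mul, derivative_X_sub_C, one_mul, eval_add,
      eval_mul, eval_sub, eval_X, eval_C, P.add_mem_iff_left (P.mul_mem_right _ h1b), eval_prod,
      Ideal.IsPrime.prod_mem_iff]
    rintro ⟨g, hg, hgP⟩
    rw [eval_sub, eval_X, eval_C] at hgP
    exact h1P (by simpa using add_mem hgP (hb' g (Finset.ne_of_mem_erase hg)))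

/-- If the valuation is not the only extension to `L`, then `L` embeds in the henselian field `Kh`:
the root of `f` produced by Hensel's lemma in `Kh` is a conjugate of `b`, hence it generates
`L`. -/
lemma mem_of_henselian {Ω Γ : Type*} [Field Ω] [Algebra K Ω] [Algebra L Ω] [IsScalarTower K L Ω]
    [LinearOrderedCommGroupWithZero Γ] (w : Valuation Ω Γ) (Kh : IntermediateField K Ω)
    (hhens : HenselianLocalRing (w.comap (algebraMap Kh Ω)).integer)
    [FiniteDimensional K L] [IsGalois K L] (hp : (Module.finrank K L).Prime)
    {R : ValuationSubring L}
    (hR : R.comap (algebraMap K L) = (w.comap (algebraMap K Ω)).valuationSubring)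
    (hne : R ≠ (w.comap (algebraMap L Ω)).valuationSubring) (x : L) :
    algebraMap L Ω x ∈ Kh := by
  set A := (w.comap (algebraMap K Ω)).valuationSubring with hA
  have hO : (w.comap (algebraMap L Ω)).valuationSubring.comap (algebraMap K L) = A := by
    ext k
    simp [hA, ValuationSubring.mem_comap, Valuation.mem_valuationSubring_iff,
      ← IsScalarTower.algebraMap_apply]
  obtain ⟨b, f, hfm, hf, hbK, hf1, hf1'⟩ := exists_hensel_polynomial hp hO hR hne
  let H := (w.comap (algebraMap Kh Ω)).integer
  let ι : A →+* H := ((algebraMap K Kh).comp (algebraMap A K)).codRestrict H fun a ↦ a.2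
  have hι : ∀ a, a ∈ IsLocalRing.maximalIdeal A → ι a ∈ IsLocalRing.maximalIdeal H := by
    intro a ha
    rw [IsLocalRing.mem_maximalIdeal, mem_nonunits_iff] at ha ⊢
    rw [Valuation.Integer.not_isUnit_iff_valuation_lt_one]
    exact Valuation.Integer.not_isUnit_iff_valuation_lt_one
      (v := w.comap (algebraMap K Ω)) (x := a) |>.mp ha
  have hev : ∀ q : A[X], (q.map ι).eval 1 = ι (q.eval 1) := fun q ↦ eval_one_map ι q
  obtain ⟨c, hc, -⟩ := hhens.is_henselian (f.map ι) (hfm.map ι) 1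
    (by rw [hev]; exact hι _ hf1) (by rw [derivative_map, hev]; exact hf1'.map ι)
  let φ : H →+* Ω := (algebraMap Kh Ω).comp H.subtype
  have hφ : φ.comp ι = (algebraMap L Ω).comp (algebraMap A L) := by
    ext a
    exact IsScalarTower.algebraMap_apply K L Ω a
  have hroot : (∏ g : Gal(L/K), (φ c - algebraMap L Ω (g b))) = 0 := by
    have h1 : ((f.map ι).map φ).eval (φ c) = 0 := by
      rw [eval_map_apply, hc.eq_zero, map_zero]
    rw [Polynomial.map_map, hφ, ← Polynomial.map_map, hf, Polynomial.map_prod, eval_prod] at h1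
    simpa using h1
  obtain ⟨g, -, hg⟩ := Finset.prod_eq_zero_iff.mp hroot
  have hgb : algebraMap L Ω (g b) ∈ Kh := by
    rw [← sub_eq_zero.mp hg]; exact (c : Kh).2
  have : IsSimpleOrder (IntermediateField K L) :=
    IntermediateField.isSimpleOrder_of_finrank_prime K L hp
  have hgbK : g b ∉ (⊥ : IntermediateField K L) := by
    rintro ⟨k, hk⟩
    refine hbK ⟨k, g.injective ?_⟩
    rw [g.commutes]; exact hk
  let E : IntermediateField K L := Kh.comap (IsScalarTower.toAlgHom K L Ω)
  rcases eq_bot_or_eq_top E with hE | hE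
  · exact absurd (hE ▸ (show g b ∈ E from hgb)) hgbK
  · exact (hE ▸ IntermediateField.mem_top : x ∈ E)

/-! ### The purely inseparable case and the conclusion -/

lemma eq_of_isPurelyInseparable [IsPurelyInseparable K L] {R O : ValuationSubring L}
    (h : R.comap (algebraMap K L) = O.comap (algebraMap K L)) : R = O := by
  have key : ∀ V : ValuationSubring L, ∀ (x : L) (n : ℕ), n ≠ 0 → (x ^ n ∈ V ↔ x ∈ V) := by
    intro V x n hn
    rw [← V.valuation_le_one_iff, ← V.valuation_le_one_iff, map_pow, pow_le_one_iff hn]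
  ext x
  obtain ⟨n, y, hy⟩ := IsPurelyInseparable.pow_mem K (ringExpChar K) x
  have hn : ringExpChar K ^ n ≠ 0 := pow_ne_zero _ (expChar_pos K _).ne'
  rw [← key R x _ hn, ← key O x _ hn, ← hy, ← ValuationSubring.mem_comap, h,
    ValuationSubring.mem_comap]

end

/-- Let `(K(a)|K,v)` be a normal extension of valued fields of prime degree
`p`, and let `K^h` be a henselization of `(K,v)`.  If `a ∉ K^h`, then the extension of the
valuation `v` from `K` to `K(a)` is unique.

Everything takes place inside a fixed algebraic closure `Ω` of `K`, equipped with a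
valuation `w` (which restricts to `v` on `K` and on all intermediate fields); since `Ω`
is algebraically closed, `(Ω,w)` is henselian, and the henselization `K^h` of `(K, v)`
inside `Ω` is characterized as the smallest intermediate field whose induced valuation
ring is henselian.  These two characterizing properties of `Kh` are taken as hypotheses. -/
theorem statement9 {K Ω : Type*} [Field K] [Field Ω] [Algebra K Ω] [IsAlgClosure K Ω]
    {Γ : Type*} [LinearOrderedCommGroupWithZero Γ] (w : Valuation Ω Γ)
    (Kh : IntermediateField K Ω)
    (hhens : HenselianLocalRing (w.comap (algebraMap Kh Ω)).integer)
    (hmin : ∀ E : IntermediateField K Ω,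
      HenselianLocalRing (w.comap (algebraMap E Ω)).integer → Kh ≤ E)
    (p : ℕ) (hp : p.Prime) (a : Ω)
    (hnormal : Normal K (IntermediateField.adjoin K {a}))
    (hdeg : Module.finrank K (IntermediateField.adjoin K {a}) = p)
    (ha : a ∉ Kh) :
    UniqueExtension K (IntermediateField.adjoin K {a})
      (w.comap (algebraMap (IntermediateField.adjoin K {a}) Ω)) := by
  set L := IntermediateField.adjoin K {a}
  have hfin : (Module.finrank K L).Prime := hdeg ▸ hp
  have : FiniteDimensional K L := Module.finite_of_finrank_pos hfin.pos
  intro R hR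
  have hR' : R.comap (algebraMap K L) = (w.comap (algebraMap K Ω)).valuationSubring :=
    ValuationSubring.toSubring_injective hR
  have hsimple : IsSimpleOrder (IntermediateField K L) :=
    IntermediateField.isSimpleOrder_of_finrank_prime K L hfin
  rcases eq_bot_or_eq_top (separableClosure K L) with h | h
  · have : IsPurelyInseparable K L := ⟨inferInstance, fun x hx ↦ by
      rw [← mem_separableClosure_iff, h, IntermediateField.mem_bot] at hx
      exact hx⟩
    exact eq_of_isPurelyInseparable (K := K) hR'
  · have : Algebra.IsSeparable K L := (separableClosure.eq_top_iff K L).mp h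
    have : IsGalois K L := ⟨⟩
    by_contra hne
    exact ha (mem_of_henselian w Kh hhens hfin hR' hne
      ⟨a, IntermediateField.mem_adjoin_simple_self K a⟩)

end Statement9
end

section
/- Let (K(a)|K,v) be a normal extension of valued fields of prime degree p = char(Kv) > 0, and assume (K,v) has rank 1. If v(a−K) has no maximal element and is bounded above in vK, then the extension of v from K to K(a) is unique and (K(a)|K,v) is immediate with defect p. -/
/-!
Write `n = [F : K]`, a prime number, and let `v` be multiplicative: `x` and `y` are close when
`v (x - y)` is small.  The boundedness hypothesis says that `a` is not a limit of elements of `K`.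

*Galois invariance* (`valuation_algEquiv`).  The automorphisms preserving `v` form a subgroup `D` of
`Gal(F/K)`.  By the Galois correspondence and primality of `n`, `D` is trivial or everything.  If `D`
were trivial but not everything, the absolute values `v ∘ σ` would be pairwise inequivalent (they
agree on `K`, where `v` is nontrivial) and the fixed field of `Gal(F/K)` would be `K`.  Weak
approximation then gives `y` with `y` close to `a` and all other conjugates of `y` close to `0`, so
that the trace `∑ σ y` is an element of `K` close to `a`, which is impossible.

*Uniqueness* (`valuationSubring_unique`).  Since `F|K` is normal, invariance shows that an element
with `v x ≤ 1` has a minimal polynomial with coefficients in the valuation ring of `K`, so it lies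
in every valuation ring of `F` above it; rank one excludes strictly larger rings.

*Immediacy*.  Suppose `x ∉ K` is such that `v (g 0) ≤ v (g x)` for every polynomial `g` over `K` of
degree `< n`.  Writing `a = g x`, one sees that `g 0` is a best approximation of `a` in `K`
(`exists_closest_of_coeff_zero_le`), contrary to the absence of a maximum.  Such an `x` exists as
soon as the extension is not immediate:

* if `v x` is not in the value group of `K`, invariance gives `v x ^ n ∈ vK`, so the terms of `g x`
  have distinct values (`coeff_zero_le_of_value_notMem`);
* if `v x ≤ 1` and the residue `ξ` of `x` is not in the residue field of `K`, the reduction of the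
  minimal polynomial of `x` has only conjugates of `ξ` as roots, hence is a power of the minimal
  polynomial of `ξ`; the latter has therefore degree `n`, and `1, ξ, …, ξ ^ (n - 1)` are linearly
  independent (`coeff_zero_le_of_residue_notMem`).

The separable and the purely inseparable case are treated uniformly.
-/

namespace Statement10

open scoped NNReal

/-- `(F|K,v)` is an *immediate* extension of valued fields: the canonical embeddings
`vK → vF` and `Kv → Fv` are surjective (multiplicative notation). -/
def IsImmediateExtension (K F : Type*) [Field K] [Field F] [Algebra K F]
    {Γ : Type*} [LinearOrderedCommGroupWithZero Γ] (v : Valuation F Γ) : Prop :=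
  (∀ x : F, ∃ c : K, v (algebraMap K F c) = v x) ∧
  (∀ x : F, v x ≤ 1 → ∃ c : K, v (x - algebraMap K F c) < 1)

/-- The extension of the valuation `v` from `K` to `F` is unique: there is exactly one
valuation ring of `F` lying over the valuation ring of the restriction of `v` to `K`,
namely that of `v`.  (Valuation subrings of `F` whose preimage in `K` is the valuation
ring of `v|K` correspond exactly to the extensions of `v|K` to `F`, up to equivalence.) -/
def UniqueExtension (K F : Type*) [Field K] [Field F] [Algebra K F]
    {Γ : Type*} [LinearOrderedCommGroupWithZero Γ] (v : Valuation F Γ) : Prop :=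
  ∀ R : ValuationSubring F,
    R.toSubring.comap (algebraMap K F) = (v.comap (algebraMap K F)).integer →
    R = v.valuationSubring

open Polynomial

/-! ### Galois invariance of the valuation -/

/-- The real absolute value `x ↦ v (σ x)` on `F` attached to a `K`-automorphism `σ`. -/
noncomputable def conjAbs {K F : Type*} [Field K] [Field F] [Algebra K F]
    (v : Valuation F ℝ≥0) (σ : F ≃ₐ[K] F) : AbsoluteValue F ℝ where
  toFun x := (v (σ x) : ℝ)
  map_mul' x y := by simp
  nonneg' x := NNReal.coe_nonneg _
  eq_zero' x := by simp
  add_le' x y := by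
    rw [map_add, ← NNReal.coe_add, NNReal.coe_le_coe]
    exact (v.map_add _ _).trans (max_le_add_of_nonneg zero_le zero_le)

theorem conjAbs_apply {K F : Type*} [Field K] [Field F] [Algebra K F]
    (v : Valuation F ℝ≥0) (σ : F ≃ₐ[K] F) (x : F) : conjAbs v σ x = (v (σ x) : ℝ) := rfl

/-- Equivalent conjugates of `v` are equal: one is a power of the other, and the exponent is `1`
because they agree on `K`, where `v` is nontrivial. -/
theorem conjAbs_eq_of_isEquiv {K F : Type*} [Field K] [Field F] [Algebra K F]
    (v : Valuation F ℝ≥0) (hrank1 : ∃ x : K, x ≠ 0 ∧ v (algebraMap K F x) ≠ 1)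
    {σ τ : F ≃ₐ[K] F} (h : (conjAbs v σ).IsEquiv (conjAbs v τ)) (x : F) :
    v (σ x) = v (τ x) := by
  obtain ⟨c, -, hc⟩ := AbsoluteValue.isEquiv_iff_exists_rpow_eq.1 h
  obtain ⟨t, ht0, ht1⟩ := hrank1
  have h0 : (0 : ℝ) < v (algebraMap K F t) := by
    rw [NNReal.coe_pos, Valuation.pos_iff]; simpa using ht0
  have h1 : (v (algebraMap K F t) : ℝ) ≠ 1 := by exact_mod_cast ht1
  have hct := congrFun hc (algebraMap K F t)
  simp only [conjAbs_apply, AlgEquiv.commutes] at hct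
  have hc1 : c = 1 := by
    have := congrArg Real.log hct
    rw [Real.log_rpow h0] at this
    exact (mul_eq_right₀ (Real.log_ne_zero_of_pos_of_ne_one h0 h1)).1 this
  have := congrFun hc x
  simp only [conjAbs_apply, hc1, Real.rpow_one] at this
  exact_mod_cast this

/-- If some `a` is not approximated arbitrarily well by `K` and `[F : K]` is prime, then every
`K`-automorphism of `F` preserves `v`. -/
theorem valuation_algEquiv {K F : Type*} [Field K] [Field F] [Algebra K F]
    (v : Valuation F ℝ≥0) (hdeg : (Module.finrank K F).Prime)
    (hrank1 : ∃ x : K, x ≠ 0 ∧ v (algebraMap K F x) ≠ 1) (a : F)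
    (hbdd : ∃ b : K, b ≠ 0 ∧ ∀ c : K, v (algebraMap K F b) ≤ v (a - algebraMap K F c))
    (σ : F ≃ₐ[K] F) (x : F) : v (σ x) = v x := by
  classical
  have hfin : FiniteDimensional K F := Module.finite_of_finrank_pos hdeg.pos
  have hsimple := IntermediateField.isSimpleOrder_of_finrank_prime K F hdeg
  let D : Subgroup (F ≃ₐ[K] F) :=
    { carrier := {σ | ∀ x, v (σ x) = v x}
      mul_mem' := fun {s t} hs ht x => by
        rw [AlgEquiv.mul_apply, hs, ht]
      one_mem' := fun x => rfl
      inv_mem' := fun {s} hs x => by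
        rw [← hs (s⁻¹ x), ← AlgEquiv.mul_apply, mul_inv_cancel, AlgEquiv.one_apply] }
  suffices hD : D = ⊤ by
    have : σ ∈ D := hD ▸ Subgroup.mem_top σ
    exact this x
  by_contra hD
  -- There are no fields strictly between `K` and `F`, so `D` is trivial and `K` is the fixed field.
  have hDbot : D = ⊥ := by
    rw [← IntermediateField.fixingSubgroup_fixedField D]
    rcases eq_bot_or_eq_top (IntermediateField.fixedField D) with h | h
    · refine absurd ?_ hD
      rw [← IntermediateField.fixingSubgroup_fixedField D, h,
        IntermediateField.fixingSubgroup_bot]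
    · rw [h, IntermediateField.fixingSubgroup_top]
  have hfix : IntermediateField.fixedField (⊤ : Subgroup (F ≃ₐ[K] F)) = ⊥ := by
    rcases eq_bot_or_eq_top (IntermediateField.fixedField (⊤ : Subgroup (F ≃ₐ[K] F))) with h | h
    · exact h
    · refine absurd ?_ hD
      rw [hDbot, ← IntermediateField.fixingSubgroup_fixedField (⊤ : Subgroup (F ≃ₐ[K] F)), h,
        IntermediateField.fixingSubgroup_top]
  have hpair : Pairwise fun s t : F ≃ₐ[K] F => ¬ (conjAbs v s).IsEquiv (conjAbs v t) := by
    intro s t hst h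
    apply hst
    have hmem : s * t⁻¹ ∈ D := fun y => by
      rw [AlgEquiv.mul_apply, conjAbs_eq_of_isEquiv v hrank1 h, ← AlgEquiv.mul_apply,
        mul_inv_cancel, AlgEquiv.one_apply]
    rw [hDbot, Subgroup.mem_bot] at hmem
    exact mul_inv_eq_one.1 hmem
  have hnon : ∀ s : F ≃ₐ[K] F, (conjAbs v s).IsNontrivial := by
    obtain ⟨t, ht0, ht1⟩ := hrank1
    intro s
    refine ⟨algebraMap K F t, by simpa using ht0, ?_⟩
    rw [conjAbs_apply, AlgEquiv.commutes]
    exact_mod_cast ht1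
  obtain ⟨b, hb0, hb⟩ := hbdd
  have hbpos : (0 : ℝ) < v (algebraMap K F b) := by
    rw [NNReal.coe_pos, Valuation.pos_iff]; simpa using hb0
  -- Weak approximation: `v (a - y) < v b`, and `v (s y) < v b` for every `s ≠ 1`.
  obtain ⟨y, hy⟩ := Metric.denseRange_iff.1 (AbsoluteValue.denseRange_algebraMap_pi hnon hpair)
    (fun s => WithAbs.toAbs (conjAbs v s) (if s = 1 then a else 0)) _ hbpos
  rw [dist_pi_lt_iff hbpos] at hy
  have hy' : ∀ s : F ≃ₐ[K] F, v (s ((if s = 1 then a else 0) - y)) < v (algebraMap K F b) := by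
    intro s
    have := hy s
    rw [dist_eq_norm] at this
    exact_mod_cast this
  -- The trace of `y` lies in `K` and is closer to `a` than `v b`.
  have htr : (∑ s : F ≃ₐ[K] F, s y) ∈ IntermediateField.fixedField (⊤ : Subgroup (F ≃ₐ[K] F)) := by
    rintro ⟨t, -⟩
    change t (∑ s : F ≃ₐ[K] F, s y) = _
    rw [map_sum]
    exact Fintype.sum_equiv (Equiv.mulLeft t) _ _ (fun s => rfl)
  rw [hfix, IntermediateField.mem_bot] at htr
  obtain ⟨c, hc⟩ := htr
  refine absurd (hb c) (not_le.2 ?_)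
  have : a - algebraMap K F c = ∑ s : F ≃ₐ[K] F, s ((if s = 1 then a else 0) - y) := by
    rw [hc]
    simp only [map_sub, Finset.sum_sub_distrib]
    congr 1
    rw [Finset.sum_eq_single 1]
    · simp
    · intro s _ hs; simp [hs]
    · simp
  rw [this]
  exact v.map_sum_lt' (by exact_mod_cast hbpos) fun s _ => hy' s

/-! ### Uniqueness of the extension -/

/-- The minimal polynomial is a product of factors `X - σ x`, all with coefficients in the
valuation ring. -/
theorem minpoly_coeff_le_one {K F : Type*} [Field K] [Field F] [Algebra K F]
    (v : Valuation F ℝ≥0) [FiniteDimensional K F] [Normal K F]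
    (hinv : ∀ (σ : F ≃ₐ[K] F) (x : F), v (σ x) = v x) {x : F} (hx : v x ≤ 1) (n : ℕ) :
    v (algebraMap K F ((minpoly K x).coeff n)) ≤ 1 := by
  have hint : IsIntegral K x := Algebra.IsIntegral.isIntegral x
  have hsplit := Normal.splits (inferInstance : Normal K F) x
  have hprod := hsplit.eq_prod_roots
  rw [((minpoly.monic hint).map _).leadingCoeff, C_1, one_mul] at hprod
  have hmem : (minpoly K x).map (algebraMap K F) ∈ lifts v.valuationSubring.subtype := by
    rw [hprod]
    refine Subsemiring.multiset_prod_mem _ _ fun q hq => ?_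
    obtain ⟨y, hy, rfl⟩ := Multiset.mem_map.1 hq
    have hroot : aeval y (minpoly K x) = 0 := by
      rw [aeval_def, ← eval_map]; exact (mem_roots'.1 hy).2
    obtain ⟨σ, rfl⟩ := minpoly.exists_algEquiv_of_root' (Algebra.IsAlgebraic.isAlgebraic x) hroot
    refine (mem_lifts _).2 ⟨X - C ⟨σ x, (hinv σ x).trans_le hx⟩, by simp⟩
  obtain ⟨z, hz⟩ := (lifts_iff_coeff_lifts _).1 hmem n
  rw [← coeff_map, ← hz]
  exact z.2

theorem valuationSubring_unique {K F : Type*} [Field K] [Field F] [Algebra K F]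
    (v : Valuation F ℝ≥0) [FiniteDimensional K F] [Normal K F]
    (hrank1 : ∃ x : K, x ≠ 0 ∧ v (algebraMap K F x) ≠ 1)
    (hinv : ∀ (σ : F ≃ₐ[K] F) (x : F), v (σ x) = v x) (R : ValuationSubring F)
    (hR : R.toSubring.comap (algebraMap K F) = (v.comap (algebraMap K F)).integer) :
    R = v.valuationSubring := by
  have hRK : ∀ c : K, algebraMap K F c ∈ R ↔ v (algebraMap K F c) ≤ 1 := fun c => by
    have := SetLike.ext_iff.1 hR c
    exact this
  have hle : ∀ x : F, v x ≤ 1 → x ∈ R := by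
    intro x hx
    have hint : IsIntegral K x := Algebra.IsIntegral.isIntegral x
    have hmem : (minpoly K x).map (algebraMap K F) ∈ lifts R.subtype := by
      rw [lifts_iff_coeff_lifts]
      intro n
      rw [coeff_map]
      exact ⟨⟨_, (hRK _).2 (minpoly_coeff_le_one v hinv hx n)⟩, rfl⟩
    obtain ⟨q, hq, -, hmon⟩ := lifts_and_degree_eq_and_monic hmem ((minpoly.monic hint).map _)
    have : IsIntegral R x := by
      refine ⟨q, hmon, ?_⟩
      rw [← eval_map]
      change eval x (q.map R.subtype) = 0
      rw [hq, eval_map, ← aeval_def, minpoly.aeval]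
    obtain ⟨y, rfl⟩ := IsIntegrallyClosed.isIntegral_iff.1 this
    exact y.2
  have hc : ∃ c : K, 1 < v (algebraMap K F c) := by
    obtain ⟨t, ht0, ht1⟩ := hrank1
    rcases lt_or_gt_of_ne ht1 with h | h
    · refine ⟨t⁻¹, ?_⟩
      rw [map_inv₀, map_inv₀]
      exact (one_lt_inv₀ ((Valuation.pos_iff _).2 (by simpa using ht0))).2 h
    · exact ⟨t, h⟩
  ext x
  refine ⟨fun hx => ?_, hle x⟩
  change v x ≤ 1
  by_contra! hlt
  obtain ⟨c, hc⟩ := hc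
  have hx0 : x ≠ 0 := by rintro rfl; simp at hlt
  -- For large `n` the quotient `c / x ^ n` lies in `R`, hence so does `c`, although `v c > 1`.
  obtain ⟨n, hn⟩ := pow_unbounded_of_one_lt (v (algebraMap K F c)) hlt
  refine absurd ((hRK c).1 ?_) (not_le.2 hc)
  have h1 : (x ^ n)⁻¹ * algebraMap K F c ∈ R := by
    apply hle
    rw [map_mul, map_inv₀, map_pow]
    exact inv_mul_le_one_of_le₀ hn.le zero_le
  have h2 := mul_mem (pow_mem hx n) h1
  rwa [mul_inv_cancel_left₀ (pow_ne_zero _ hx0)] at h2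

/-! ### Best approximations from a generator -/

theorem minpoly_natDegree_eq {K F : Type*} [Field K] [Field F] [Algebra K F]
    (hdeg : (Module.finrank K F).Prime) {x : F} (hx : ∀ c : K, algebraMap K F c ≠ x) :
    IntermediateField.adjoin K {x} = ⊤ ∧ (minpoly K x).natDegree = Module.finrank K F := by
  have hfin : FiniteDimensional K F := Module.finite_of_finrank_pos hdeg.pos
  have hsimple := IntermediateField.isSimpleOrder_of_finrank_prime K F hdeg
  have htop : IntermediateField.adjoin K {x} = ⊤ := by
    refine (eq_bot_or_eq_top _).resolve_left fun h => ?_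
    rw [IntermediateField.adjoin_simple_eq_bot_iff, IntermediateField.mem_bot] at h
    obtain ⟨c, hc⟩ := h
    exact hx c hc
  exact ⟨htop, (Field.primitive_element_iff_minpoly_natDegree_eq K x).1 htop⟩

theorem exists_aeval_eq {K F : Type*} [Field K] [Field F] [Algebra K F]
    (hdeg : (Module.finrank K F).Prime) {x : F} (hx : ∀ c : K, algebraMap K F c ≠ x) (a : F) :
    ∃ g : K[X], g.natDegree < Module.finrank K F ∧ aeval x g = a := by
  have hfin : FiniteDimensional K F := Module.finite_of_finrank_pos hdeg.pos
  obtain ⟨htop, hd⟩ := minpoly_natDegree_eq hdeg hx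
  have hint : IsIntegral K x := Algebra.IsIntegral.isIntegral x
  have hmem : a ∈ Algebra.adjoin K {x} := by
    rw [← IntermediateField.adjoin_simple_toSubalgebra_of_isAlgebraic hint.isAlgebraic, htop]
    trivial
  rw [Algebra.adjoin_singleton_eq_range_aeval] at hmem
  obtain ⟨q, rfl⟩ := hmem
  refine ⟨q %ₘ minpoly K x, ?_, aeval_modByMonic_eq_self_of_root (minpoly.aeval K x)⟩
  rw [← hd]
  exact natDegree_modByMonic_lt q (minpoly.monic hint) (minpoly.ne_one K x)

/-- If `x` generates `F` and `v (g 0) ≤ v (g x)` for all `g` of degree `< [F : K]`, then every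
element `a = g x` has a best approximation in `K`, namely `g 0`. -/
theorem exists_closest_of_coeff_zero_le {K F : Type*} [Field K] [Field F] [Algebra K F]
    (v : Valuation F ℝ≥0) (hdeg : (Module.finrank K F).Prime) {x : F}
    (hx : ∀ c : K, algebraMap K F c ≠ x)
    (hval : ∀ g : K[X], g.natDegree < Module.finrank K F →
      v (algebraMap K F (g.coeff 0)) ≤ v (aeval x g)) (a : F) :
    ∃ c : K, ∀ c' : K, v (a - algebraMap K F c) ≤ v (a - algebraMap K F c') := by
  obtain ⟨g, hg, rfl⟩ := exists_aeval_eq hdeg hx a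
  refine ⟨g.coeff 0, fun c' => ?_⟩
  have h := hval (g - C c') (by rwa [natDegree_sub_C])
  simp only [coeff_sub, coeff_C_zero, map_sub, aeval_C] at h
  have : aeval x g - algebraMap K F (g.coeff 0) = (aeval x g - algebraMap K F c') -
    (algebraMap K F (g.coeff 0) - algebraMap K F c') := by ring
  rw [this]
  exact (v.map_sub _ _).trans (max_le le_rfl h)

/-! ### The value group -/

/-- `v x ^ [F : K]` is the value of the constant coefficient of the minimal polynomial, which is
up to sign the product of the conjugates of `x`. -/
theorem exists_valuation_pow_finrank {K F : Type*} [Field K] [Field F] [Algebra K F]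
    (v : Valuation F ℝ≥0) (hdeg : (Module.finrank K F).Prime) [Normal K F]
    (hinv : ∀ (σ : F ≃ₐ[K] F) (x : F), v (σ x) = v x) {x : F}
    (hx : ∀ c : K, algebraMap K F c ≠ x) :
    ∃ d : K, v (algebraMap K F d) = v x ^ Module.finrank K F := by
  have hfin : FiniteDimensional K F := Module.finite_of_finrank_pos hdeg.pos
  obtain ⟨-, hd⟩ := minpoly_natDegree_eq hdeg hx
  have hint : IsIntegral K x := Algebra.IsIntegral.isIntegral x
  have hsplit := Normal.splits (inferInstance : Normal K F) x
  have hmon := (minpoly.monic hint).map (algebraMap K F)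
  refine ⟨(minpoly K x).coeff 0, ?_⟩
  rw [← coeff_map, hsplit.coeff_zero_eq_prod_roots_of_monic hmon, map_mul, map_pow,
    Valuation.map_neg, map_one, one_pow, one_mul, map_multiset_prod,
    Multiset.map_congr rfl (g := fun _ => v x), Multiset.map_const', Multiset.prod_replicate,
    ← hsplit.natDegree_eq_card_roots, natDegree_map, hd]
  intro y hy
  have hroot : aeval y (minpoly K x) = 0 := by
    rw [aeval_def, ← eval_map]; exact (mem_roots'.1 hy).2
  obtain ⟨σ, rfl⟩ := minpoly.exists_algEquiv_of_root' (Algebra.IsAlgebraic.isAlgebraic x) hroot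
  exact hinv σ x

/-- If `v x ^ p` and `v x ^ k` are values of `K` with `k` prime to `p`, then so is `v x`, by
Bézout. -/
theorem exists_valuation_eq_of_pow {K F : Type*} [Field K] [Field F] [Algebra K F]
    (v : Valuation F ℝ≥0) {x : F} (hx : x ≠ 0) {p k : ℕ} (hk : k.Coprime p)
    (hp : ∃ d : K, v (algebraMap K F d) = v x ^ p) (hkd : ∃ d : K, v (algebraMap K F d) = v x ^ k) :
    ∃ d : K, v (algebraMap K F d) = v x := by
  obtain ⟨d, hd⟩ := hp
  obtain ⟨e, he⟩ := hkd
  have hvx : v x ≠ 0 := by simpa using hx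
  refine ⟨e ^ (k.gcdA p) * d ^ (k.gcdB p), ?_⟩
  rw [map_mul, map_mul, map_zpow₀, map_zpow₀, map_zpow₀, map_zpow₀, hd, he, ← zpow_natCast,
    ← zpow_natCast, ← zpow_mul, ← zpow_mul, ← zpow_add₀ hvx, ← Nat.gcd_eq_gcd_ab,
    Nat.coprime_iff_gcd_eq_one.1 hk, Nat.cast_one, zpow_one]

/-- If `v x` has order `p` modulo the value group of `K`, then the values of the nonzero terms of
`g x` are pairwise distinct for `g` of degree `< p`, so `v (g x)` is the largest of them. -/
theorem coeff_zero_le_of_value_notMem {K F : Type*} [Field K] [Field F] [Algebra K F]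
    (v : Valuation F ℝ≥0) {p : ℕ} (hp : p.Prime) {x : F}
    (hxp : ∃ d : K, v (algebraMap K F d) = v x ^ p)
    (hx : ∀ c : K, v (algebraMap K F c) ≠ v x) (g : K[X]) (hg : g.natDegree < p) :
    v (algebraMap K F (g.coeff 0)) ≤ v (aeval x g) := by
  have hx0 : x ≠ 0 := by rintro rfl; exact hx 0 (by simp)
  have hvx : v x ≠ 0 := by simpa using hx0
  rcases eq_or_ne (g.coeff 0) 0 with h0 | h0
  · simp [h0]
  let t : ℕ → F := fun i => algebraMap K F (g.coeff i) * x ^ i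
  have hsum : aeval x g = ∑ i ∈ Finset.range p, t i := by
    rw [aeval_eq_sum_range' hg]
    exact Finset.sum_congr rfl fun i _ => Algebra.smul_def _ _
  obtain ⟨j, hj, hmax⟩ := Finset.exists_max_image (Finset.range p) (fun i => v (t i))
    ⟨0, Finset.mem_range.2 hp.pos⟩
  have hle0 : v (algebraMap K F (g.coeff 0)) ≤ v (t j) := by
    simpa [t] using hmax 0 (Finset.mem_range.2 hp.pos)
  have htj : v (t j) ≠ 0 := by
    intro h
    rw [h] at hle0
    exact h0 (by simpa using hle0)
  -- Equal values of two nonzero terms would put a power `v x ^ (k - i)` into the value group of `K`.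
  have key : ∀ i k : ℕ, i < k → k < p → v (t i) = v (t k) → v (t k) ≠ 0 → False := by
    intro i k hik hk heq hne
    obtain ⟨m, rfl⟩ := Nat.exists_eq_add_of_lt hik
    have hne' : v (algebraMap K F (g.coeff (i + m + 1))) ≠ 0 := by
      intro h; apply hne; simp only [t, map_mul, h, zero_mul]
    obtain ⟨d, hd⟩ := exists_valuation_eq_of_pow (K := K) v hx0 (p := p) (k := m + 1)
      (Nat.coprime_of_lt_prime (by lia) (by lia) hp).symm hxp
      ⟨g.coeff i / g.coeff (i + m + 1), by
        simp only [t, map_mul, map_pow] at heq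
        rw [map_div₀, map_div₀, div_eq_iff hne']
        apply mul_right_cancel₀ (pow_ne_zero i hvx)
        rw [heq]; ring⟩
    exact hx d hd
  have hlt : ∀ i ∈ (Finset.range p).erase j, v (t i) < v (t j) := by
    intro i hi
    obtain ⟨hij, hi⟩ := Finset.mem_erase.1 hi
    refine (hmax i hi).lt_of_ne fun heq => ?_
    rcases lt_or_gt_of_ne hij with h | h
    · exact key i j h (Finset.mem_range.1 hj) heq htj
    · exact key j i h (Finset.mem_range.1 hi) heq.symm (heq ▸ htj)
  rw [hsum, ← Finset.add_sum_erase _ _ hj,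
    v.map_add_eq_of_lt_left (v.map_sum_lt htj hlt)]
  exact hle0

/-! ### The residue field -/

/-- A polynomial over `k` all of whose roots are roots of the irreducible polynomial
`minpoly k ξ` is, up to a unit, a power of it.  If it has prime degree `p`, then `ξ` has degree `1`
or `p`. -/
theorem natDegree_minpoly_of_splits_conj {k l : Type*} [Field k] [Field l] [Algebra k l] {p : ℕ}
    (hp : p.Prime) {f : k[X]} (hf : f.natDegree = p) {S : Multiset l}
    (hS : f.map (algebraMap k l) = (S.map fun η => X - C η).prod) {ξ : l} (hint : IsIntegral k ξ)
    (hroot : ∀ η ∈ S, aeval η (minpoly k ξ) = 0) :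
    (minpoly k ξ).natDegree = 1 ∨ (minpoly k ξ).natDegree = p := by
  have hdvd : ∀ T : Multiset l, T ≤ S → (T.map fun η => X - C η).prod ∣
      ((minpoly k ξ).map (algebraMap k l)) ^ T.card := by
    intro T
    induction T using Multiset.induction_on with
    | empty => simp
    | cons η T ih =>
      intro hT
      rw [Multiset.map_cons, Multiset.prod_cons, Multiset.card_cons, pow_succ']
      refine mul_dvd_mul ?_ (ih ((Multiset.le_cons_self _ _).trans hT))
      rw [dvd_iff_isRoot, IsRoot, eval_map, ← aeval_def]
      exact hroot η (Multiset.mem_of_le hT (Multiset.mem_cons_self _ _))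
  have h1 := hdvd S le_rfl
  rw [← hS, ← Polynomial.map_pow, map_dvd_map'] at h1
  obtain ⟨i, -, hi⟩ := (dvd_prime_pow (minpoly.irreducible hint).prime _).1 h1
  have h2 := natDegree_eq_of_degree_eq (degree_eq_degree_of_associated hi)
  rw [hf, natDegree_pow] at h2
  exact (Nat.dvd_prime hp).1 ⟨i, by rw [h2, mul_comm]⟩

/-- If `v x ≤ 1` and the residue of `x` is not in the residue field of `K`, then that residue has
degree `[F : K]` over it, so `v (g x)` is the largest value of a coefficient of `g` whenever
`g` has degree `< [F : K]`.  Only the comparison with the constant coefficient is recorded. -/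
theorem coeff_zero_le_of_residue_notMem {K F : Type*} [Field K] [Field F] [Algebra K F]
    (v : Valuation F ℝ≥0) (hdeg : (Module.finrank K F).Prime) [Normal K F]
    (hinv : ∀ (σ : F ≃ₐ[K] F) (x : F), v (σ x) = v x) {x : F} (hx1 : v x ≤ 1)
    (hx : ∀ c : K, 1 ≤ v (x - algebraMap K F c)) (g : K[X])
    (hg : g.natDegree < Module.finrank K F) :
    v (algebraMap K F (g.coeff 0)) ≤ v (aeval x g) := by
  have hfin : FiniteDimensional K F := Module.finite_of_finrank_pos hdeg.pos
  have hint : IsIntegral K x := Algebra.IsIntegral.isIntegral x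
  have hxK : ∀ c : K, algebraMap K F c ≠ x := by
    rintro c rfl
    exact absurd (hx c) (by simp)
  obtain ⟨-, hd⟩ := minpoly_natDegree_eq hdeg hxK
  let O : ValuationSubring K := (v.comap (algebraMap K F)).valuationSubring
  let L : ValuationSubring F := v.valuationSubring
  let ψ : O →+* L := ((algebraMap K F).comp O.subtype).codRestrict L fun c => c.2
  have hresO : ∀ c : O, IsLocalRing.residue O c = 0 ↔ v (algebraMap K F c) < 1 := fun c => by
    rw [IsLocalRing.residue_eq_zero_iff]
    exact (v.comap (algebraMap K F)).mem_maximalIdeal_iff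
  have hresL : ∀ y : L, IsLocalRing.residue L y = 0 ↔ v (y : F) < 1 := fun y => by
    rw [IsLocalRing.residue_eq_zero_iff]
    exact v.mem_maximalIdeal_iff
  have hlocal : IsLocalHom ψ := by
    refine ⟨fun c hc => ?_⟩
    have h1 := (IsLocalRing.residue_ne_zero_iff_isUnit _).2 hc
    rw [← IsLocalRing.residue_ne_zero_iff_isUnit]
    exact fun h => h1 ((hresL _).2 ((hresO c).1 h))
  let _ : Algebra (IsLocalRing.ResidueField O) (IsLocalRing.ResidueField L) :=
    (IsLocalRing.ResidueField.map ψ).toAlgebra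
  have hcomp : (algebraMap (IsLocalRing.ResidueField O) (IsLocalRing.ResidueField L)).comp
      (IsLocalRing.residue O) = (IsLocalRing.residue L).comp ψ :=
    IsLocalRing.ResidueField.map_comp_residue ψ
  -- Evaluation commutes with reduction, for polynomials with integral coefficients.
  have heval : ∀ (G : O[X]) (y : L),
      aeval (IsLocalRing.residue L y) (G.map (IsLocalRing.residue O)) = 0 ↔
        v (aeval (y : F) (G.map O.subtype)) < 1 := by
    intro G y
    have h1 : aeval (IsLocalRing.residue L y) (G.map (IsLocalRing.residue O)) =
        IsLocalRing.residue L (eval₂ ψ y G) := by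
      rw [aeval_def, eval₂_map, hcomp, hom_eval₂]
    have h2 : aeval (y : F) (G.map O.subtype) = L.subtype (eval₂ ψ y G) := by
      rw [aeval_def, eval₂_map, hom_eval₂]
      rfl
    rw [h1, hresL, h2]
    rfl
  have hlift : ∀ q : K[X], (∀ n, v (algebraMap K F (q.coeff n)) ≤ 1) →
      ∃ Q : O[X], Q.map O.subtype = q := fun q hq =>
    (mem_lifts q).1 ((lifts_iff_coeff_lifts _).2 fun n => ⟨⟨q.coeff n, hq n⟩, rfl⟩)
  have hinj : Function.Injective O.subtype := Subtype.val_injective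
  -- `f` is the minimal polynomial of `x`, viewed over the valuation ring `O` of `K`.
  obtain ⟨f, hf⟩ := hlift _ (minpoly_coeff_le_one v hinv hx1)
  have hfmon : f.Monic := by
    apply monic_of_injective hinj
    rw [hf]; exact minpoly.monic hint
  have hfdeg : (f.map (IsLocalRing.residue O)).natDegree = Module.finrank K F := by
    rw [hfmon.natDegree_map, ← hd, ← hf, hfmon.natDegree_map]
  let ξ := IsLocalRing.residue L ⟨x, hx1⟩
  have hξ : IsIntegral (IsLocalRing.ResidueField O) ξ := by
    refine ⟨_, hfmon.map (IsLocalRing.residue O), ?_⟩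
    rw [← aeval_def, heval, hf]
    simp
  have hconj : ∀ y ∈ ((minpoly K x).map (algebraMap K F)).roots, ∃ σ : F ≃ₐ[K] F, σ x = y := by
    intro y hy
    have hroot : aeval y (minpoly K x) = 0 := by
      rw [aeval_def, ← eval_map]; exact (mem_roots'.1 hy).2
    exact minpoly.exists_algEquiv_of_root' (Algebra.IsAlgebraic.isAlgebraic x) hroot
  obtain ⟨S, hS⟩ : ∃ S : Multiset L,
      S.map L.subtype = ((minpoly K x).map (algebraMap K F)).roots := by
    refine CanLift.prf (self := Multiset.canLift L.subtype (fun y => v y ≤ 1)) _ fun y hy => ?_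
    obtain ⟨σ, rfl⟩ := hconj y hy
    exact (hinv σ x).trans_le hx1
  have hfS : f.map ψ = (S.map fun y => X - C y).prod := by
    apply map_injective L.subtype Subtype.val_injective
    have hprod := (Normal.splits (inferInstance : Normal K F) x).eq_prod_roots
    rw [((minpoly.monic hint).map _).leadingCoeff, C_1, one_mul, ← hS, ← hf] at hprod
    rw [Polynomial.map_multiset_prod, Multiset.map_map, Polynomial.map_map]
    rw [Polynomial.map_map, Multiset.map_map] at hprod
    exact hprod.trans (congrArg Multiset.prod (Multiset.map_congr rfl fun y _ => by simp))
  have hdegξ := natDegree_minpoly_of_splits_conj hdeg hfdeg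
    (S := S.map (IsLocalRing.residue L)) (by
      rw [Polynomial.map_map, hcomp, ← Polynomial.map_map, hfS, Polynomial.map_multiset_prod,
        Multiset.map_map, Multiset.map_map]
      congr 2
      ext1 y
      simp) hξ (by
      intro η hη
      obtain ⟨y, hy, rfl⟩ := Multiset.mem_map.1 hη
      -- Roots of the reduction of `f` are residues of conjugates `σ x`; a lift `H` of the minimal
      -- polynomial of `ξ` has `v (H (σ x)) = v (σ (H x)) = v (H x) < 1`.
      obtain ⟨H, hH⟩ := Polynomial.map_surjective (IsLocalRing.residue O)
        IsLocalRing.residue_surjective (minpoly (IsLocalRing.ResidueField O) ξ)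
      obtain ⟨σ, hσ⟩ := hconj y (hS ▸ Multiset.mem_map_of_mem _ hy)
      rw [← hH, heval, ← hσ, aeval_algHom_apply, hinv]
      refine (heval H ⟨x, hx1⟩).1 ?_
      rw [hH]
      exact minpoly.aeval _ _)
  rcases eq_or_ne (g.coeff 0) 0 with h0 | h0
  · simp [h0]
  by_contra! hlt
  obtain ⟨j, -, hmax⟩ := Finset.exists_max_image (Finset.range (Module.finrank K F))
    (fun i => v (algebraMap K F (g.coeff i))) ⟨0, Finset.mem_range.2 hdeg.pos⟩
  have hle0 := hmax 0 (Finset.mem_range.2 hdeg.pos)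
  have hj0 : g.coeff j ≠ 0 := by
    intro h
    rw [h] at hle0
    exact h0 (by simpa using hle0)
  have hvj : 0 < v (algebraMap K F (g.coeff j)) := (Valuation.pos_iff _).2 (by simpa using hj0)
  -- Dividing `g` by a coefficient of largest value gives an integral polynomial `G` with a
  -- coefficient `1`, whose reduction is a nonzero polynomial of degree `< [F : K]` vanishing at `ξ`.
  obtain ⟨G, hG⟩ := hlift (C (g.coeff j)⁻¹ * g) fun n => by
    rw [coeff_C_mul, map_mul, map_mul, map_inv₀, map_inv₀]
    refine inv_mul_le_one_of_le₀ ?_ zero_le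
    rcases lt_or_ge n (Module.finrank K F) with hn | hn
    · exact hmax n (Finset.mem_range.2 hn)
    · rw [coeff_eq_zero_of_natDegree_lt (hg.trans_le hn)]; simp
  have hGj : G.coeff j = 1 := by
    apply hinj
    rw [← coeff_map, hG, coeff_C_mul, inv_mul_cancel₀ hj0, map_one]
  have hG0 : aeval ξ (G.map (IsLocalRing.residue O)) = 0 := by
    rw [heval, hG, map_mul, aeval_C, map_mul, map_inv₀, map_inv₀]
    exact (inv_mul_lt_one₀ hvj).2 (hlt.trans_le hle0)
  have hGne : G.map (IsLocalRing.residue O) ≠ 0 := by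
    intro h
    have := congrArg (coeff · j) h
    simp [hGj] at this
  have hle := natDegree_le_natDegree (minpoly.degree_le_of_ne_zero _ ξ hGne hG0)
  have hGdeg : (G.map (IsLocalRing.residue O)).natDegree < Module.finrank K F := by
    refine natDegree_map_le.trans_lt ?_
    rw [← natDegree_map_eq_of_injective hinj, hG]
    exact (natDegree_C_mul_le _ _).trans_lt hg
  have hone := hdegξ.resolve_right (hle.trans_lt hGdeg).ne
  obtain ⟨c, hc⟩ := minpoly.natDegree_eq_one_iff.1 hone
  obtain ⟨c, rfl⟩ := IsLocalRing.residue_surjective c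
  have hc' : IsLocalRing.residue L (ψ c) = ξ := by rw [← hc]; rfl
  refine absurd (hx c) (not_le.2 ?_)
  refine (hresL (⟨x, hx1⟩ - ψ c)).1 ?_
  rw [map_sub, hc', sub_self]

/-- Let `(K(a)|K,v)` be a normal extension of valued fields of prime
degree `p = char(Kv)`, and assume `(K,v)` has rank `1`.  If `v(a−K)` has no maximal
element and is bounded above in `vK`, then the extension of `v` from `K` to `K(a)` is
unique and `(K(a)|K,v)` is immediate, with defect `p`.

Here `F = K(a)`.  Rank `1` (an archimedean ordered value group, nontrivial) is rendered by
taking the valuation with values in `ℝ≥0` and requiring it to be nontrivial on `K`; the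
condition `p = char(Kv) > 0` is rendered as: `p` prime and `v p < 1`.  Multiplicative
notation reverses the additive order of the paper: "no maximal element" reads
`∀ c ∃ c', v(a−c') < v(a−c)`, and "bounded above (additively) by an element of `vK`"
reads `∃ b ∈ K \ {0}, ∀ c, v b ≤ v (a − c)`. -/
theorem statement10 {K F : Type*} [Field K] [Field F] [Algebra K F]
    (v : Valuation F ℝ≥0)
    (p : ℕ) (hp : p.Prime) (hres : v ((p : ℕ) : F) < 1)
    (a : F) (hgen : IntermediateField.adjoin K {a} = ⊤)
    (hnormal : Normal K F) (hdeg : Module.finrank K F = p)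
    (hrank1 : ∃ x : K, x ≠ 0 ∧ v (algebraMap K F x) ≠ 1)
    (hnomax : ∀ c : K, ∃ c' : K, v (a - algebraMap K F c') < v (a - algebraMap K F c))
    (hbdd : ∃ b : K, b ≠ 0 ∧ ∀ c : K, v (algebraMap K F b) ≤ v (a - algebraMap K F c)) :
    UniqueExtension K F v ∧ IsImmediateExtension K F v := by
  subst hdeg
  have hfin : FiniteDimensional K F := Module.finite_of_finrank_pos hp.pos
  have hinv := valuation_algEquiv v hp hrank1 a hbdd
  -- An element outside `K` with the coefficient bound yields a best approximation of `a` in `K`.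
  have key : ∀ x : F, (∀ c : K, algebraMap K F c ≠ x) →
      ¬ ∀ g : K[X], g.natDegree < Module.finrank K F →
        v (algebraMap K F (g.coeff 0)) ≤ v (aeval x g) := by
    intro x hx hval
    obtain ⟨c, hc⟩ := exists_closest_of_coeff_zero_le v hp hx hval a
    obtain ⟨c', hc'⟩ := hnomax c
    exact (hc c').not_gt hc'
  refine ⟨valuationSubring_unique v hrank1 hinv, fun x => ?_, fun x hx1 => ?_⟩
  · by_contra! hx
    have hxK : ∀ c : K, algebraMap K F c ≠ x := fun c hc => hx c (by rw [hc])
    exact key x hxK (coeff_zero_le_of_value_notMem v hp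
      (exists_valuation_pow_finrank v hp hinv hxK) hx)
  · by_contra! hx
    refine key x ?_ (coeff_zero_le_of_residue_notMem v hp hinv hx1 hx)
    rintro c rfl
    exact absurd (hx c) (by simp)

end Statement10
end
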